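/- Let the setting be type A_N or type B_N, let (i_t,k_t), 1 ≤ t ≤ T, be a snake, let (j_r,ℓ_r), 1 ≤ r ≤ R, be a sequence of R ≥ 0 points of W, and let (p_1,…,p_T) and (p′_1,…,p′_T) be non-overlapping tuples in P̄_{(i_t,k_t)}. Then the following are equivalent: (i) ∏_{t=1}^T m(p′_t) = ∏_{t=1}^T m(p_t) · ∏_{r=1}^R A_{j_r,ℓ_r}⁻¹ in the free abelian group M; (ii) there is a permutation σ of {1,…,R} such that lowering moves at (j_{σ(1)},ℓ_{σ(1)}), …, (j_{σ(R)},ℓ_{σ(R)}), performed in this order starting from (p_1,…,p_T), are all defined, every intermediate tuple is non-overlapping, and the final tuple is (p′_1,…,p′_T). -/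

import Mathlib

namespace Paper

/-- The ambient setting: type `A N` (with `N ≥ 1`) or type `B N ε`
(with `N ≥ 2` and `0 < ε < 1/2`). -/
inductive Setting where
  | A (N : ℕ)
  | B (N : ℕ) (ε : ℝ)

namespace Setting

/-- The rank `N`. -/
def N : Setting → ℕ
  | A n => n
  | B n _ => n

/-- Validity of the parameters of the setting. -/
def valid : Setting → Prop
  | A n => 1 ≤ n
  | B n ε => 2 ≤ n ∧ 0 < ε ∧ ε < 1 / 2

end Setting

/-- The numbers `r_i` : in type A all equal `1`; in type B, `r_N = 1` and `r_i = 2` for `i < N`. -/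
def rr : Setting → ℕ → ℕ
  | .A _, _ => 1
  | .B n _, j => if j = n then 1 else 2

/-- The set `X` in type `A_N`. -/
def XA (n : ℕ) : Set (ℕ × ℤ) :=
  {ik | 1 ≤ ik.1 ∧ ik.1 ≤ n ∧ ((ik.1 : ℤ) - ik.2) % 2 = 1}

/-- The set `X` in type `B_N`. -/
def XB (n : ℕ) : Set (ℕ × ℤ) :=
  {ik | (ik.1 = n ∧ ik.2 % 2 = 1) ∨ (1 ≤ ik.1 ∧ ik.1 < n ∧ ik.2 % 2 = 0)}

/-- The set `X ⊆ I × ℤ`. -/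
def X : Setting → Set (ℕ × ℤ)
  | .A n => XA n
  | .B n _ => XB n

/-- The set `W = {(i,k) : (i, k - r_i) ∈ X}`. -/
def W (S : Setting) : Set (ℕ × ℤ) :=
  {ik | (ik.1, ik.2 - (rr S ik.1 : ℤ)) ∈ X S}

/-- The `r`-th point of a path (a finite list of points of the plane). -/
def pt (p : List (ℝ × ℝ)) (r : ℕ) : ℝ × ℝ := p.getD r (0, 0)

/-- The set of paths `𝒫_{i,k}` in type `A_N`. -/
def pathsA (n : ℕ) (i : ℕ) (k : ℤ) : Set (List (ℝ × ℝ)) :=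
  {p | p.length = n + 2 ∧
    (∀ r, r < n + 2 → (pt p r).1 = (r : ℝ)) ∧
    (pt p 0).2 = (i : ℝ) + (k : ℝ) ∧
    (pt p (n + 1)).2 = (n : ℝ) + 1 - (i : ℝ) + (k : ℝ) ∧
    (∀ r, r ≤ n → (pt p (r + 1)).2 - (pt p r).2 = 1 ∨ (pt p (r + 1)).2 - (pt p r).2 = -1)}

/-- The set of paths `𝒫_{N,ℓ}` in type `B_N`. -/
def pathsBspin (n : ℕ) (ε : ℝ) (l : ℤ) : Set (List (ℝ × ℝ)) :=
  {p | p.length = n + 1 ∧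
    (if l % 4 = 3 then ∀ r, r < n → (pt p r).1 = 2 * (r : ℝ)
     else ∀ r, r < n → (pt p r).1 = 4 * (n : ℝ) - 2 - 2 * (r : ℝ)) ∧
    (pt p n).1 = 2 * (n : ℝ) - 1 ∧
    (pt p 0).2 = (l : ℝ) + 2 * (n : ℝ) - 1 ∧
    (∀ r, r + 2 ≤ n → (pt p (r + 1)).2 - (pt p r).2 = 2 ∨ (pt p (r + 1)).2 - (pt p r).2 = -2) ∧
    ((pt p n).2 - (pt p (n - 1)).2 = 1 + ε ∨ (pt p n).2 - (pt p (n - 1)).2 = -(1 + ε))}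

/-- The set of paths `𝒫_{i,k}` in type `B_N`. -/
def pathsB (n : ℕ) (ε : ℝ) (i : ℕ) (k : ℤ) : Set (List (ℝ × ℝ)) :=
  if i = n then pathsBspin n ε k
  else {p | ∃ a b : List (ℝ × ℝ),
    a ∈ pathsBspin n ε (k - (2 * (n : ℤ) - 2 * (i : ℤ) - 1)) ∧
    b ∈ pathsBspin n ε (k + (2 * (n : ℤ) - 2 * (i : ℤ) - 1)) ∧
    p = a ++ b.reverse ∧
    (pt a n).1 = (pt b n).1 ∧ 0 < (pt a n).2 - (pt b n).2}

/-- The set of paths `𝒫_{i,k}`. -/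
def P : Setting → ℕ → ℤ → Set (List (ℝ × ℝ))
  | .A n => pathsA n
  | .B n ε => pathsB n ε

/-- The map `ι : X → ℤ × ℤ` of type `B_N`. -/
def iotaB (n : ℕ) (ik : ℕ × ℤ) : ℤ × ℤ :=
  if ik.1 = n then (2 * (n : ℤ) - 1, ik.2)
  else if (2 * (n : ℤ) + ik.2 - 2 * (ik.1 : ℤ)) % 4 = 2 then (2 * (ik.1 : ℤ), ik.2)
  else (4 * (n : ℤ) - 2 - 2 * (ik.1 : ℤ), ik.2)

/-- The corners of a path: `Cp S p true` is the set `C_{p,+}` of upper corners, and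
`Cp S p false` is the set `C_{p,-}` of lower corners. -/
def Cp (S : Setting) (p : List (ℝ × ℝ)) (up : Bool) : Set (ℕ × ℤ) :=
  match S with
  | .A n =>
    {jl | 1 ≤ jl.1 ∧ jl.1 ≤ n ∧
      pt p jl.1 = ((jl.1 : ℝ), (jl.2 : ℝ)) ∧
      (pt p (jl.1 - 1)).2 = (jl.2 : ℝ) + (if up then 1 else -1) ∧
      (pt p (jl.1 + 1)).2 = (jl.2 : ℝ) + (if up then 1 else -1)}
  | .B n ε =>
    {jl | jl ∈ XB n ∧
      ((∃ r : ℕ, 1 ≤ r ∧ r + 1 < p.length ∧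
          pt p r = (((iotaB n jl).1 : ℝ), ((iotaB n jl).2 : ℝ)) ∧
          (iotaB n jl).1 ≠ 0 ∧ (iotaB n jl).1 ≠ 2 * (n : ℤ) - 1 ∧
          (iotaB n jl).1 ≠ 4 * (n : ℤ) - 2 ∧
          (if up then (pt p r).2 < (pt p (r - 1)).2 ∧ (pt p r).2 < (pt p (r + 1)).2
           else (pt p (r - 1)).2 < (pt p r).2 ∧ (pt p (r + 1)).2 < (pt p r).2))
       ∨ (jl.1 = n ∧
          (if up then (2 * (n : ℝ) - 1, (jl.2 : ℝ) - ε) ∈ p ∧ (2 * (n : ℝ) - 1, (jl.2 : ℝ) + ε) ∉ p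
           else (2 * (n : ℝ) - 1, (jl.2 : ℝ) + ε) ∈ p ∧ (2 * (n : ℝ) - 1, (jl.2 : ℝ) - ε) ∉ p)))}

/-- `p'` is obtained from `p` by replacing the point `q` by the point `q'`. -/
def Replace1 (p p' : List (ℝ × ℝ)) (q q' : ℝ × ℝ) : Prop :=
  ∃ r : ℕ, r < p.length ∧ pt p r = q ∧ p'.length = p.length ∧ pt p' r = q' ∧
    ∀ s, s < p.length → s ≠ r → pt p' s = pt p s

/-- `p'` is obtained from `p` by replacing the point `q1` by `q1'` and the point `q2` by `q2'`. -/
def Replace2 (p p' : List (ℝ × ℝ)) (q1 q1' q2 q2' : ℝ × ℝ) : Prop :=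
  ∃ r s : ℕ, r < p.length ∧ s < p.length ∧ r ≠ s ∧ pt p r = q1 ∧ pt p s = q2 ∧
    p'.length = p.length ∧ pt p' r = q1' ∧ pt p' s = q2' ∧
    ∀ u, u < p.length → u ≠ r → u ≠ s → pt p' u = pt p u

/-- The path `p` can be lowered at `(j, l)`: `(j, l - r_j) ∈ C_{p,+}` and
`(j, l + r_j) ∉ C_{p,+}`. -/
def CanLower (S : Setting) (p : List (ℝ × ℝ)) (j : ℕ) (l : ℤ) : Prop :=
  (j, l - (rr S j : ℤ)) ∈ Cp S p true ∧ (j, l + (rr S j : ℤ)) ∉ Cp S p true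

/-- `p'` is the result of the lowering move at `(j,l)` applied to the path `p ∈ 𝒫_{i,k}`;
written `p' = p 𝒜_{j,l}⁻¹`. -/
def LoweredTo (S : Setting) (i : ℕ) (k : ℤ) (j : ℕ) (l : ℤ)
    (p p' : List (ℝ × ℝ)) : Prop :=
  p ∈ P S i k ∧ p' ∈ P S i k ∧ CanLower S p j l ∧
  (match S with
   | .A _ => Replace1 p p' ((j : ℝ), (l : ℝ) - 1) ((j : ℝ), (l : ℝ) + 1)
   | .B n ε =>
     if j = n then
       Replace1 p p' (2 * (n : ℝ) - 1, (l : ℝ) - 1 - ε) (2 * (n : ℝ) - 1, (l : ℝ) + 1 + ε)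
     else if j = n - 1 then
       Replace2 p p'
         (((iotaB n (j, l - 2)).1 : ℝ), (l : ℝ) - 2) (((iotaB n (j, l - 2)).1 : ℝ), (l : ℝ) + 2)
         (2 * (n : ℝ) - 1, (l : ℝ) - 1 + ε) (2 * (n : ℝ) - 1, (l : ℝ) + 1 - ε)
     else
       Replace1 p p'
         (((iotaB n (j, l - 2)).1 : ℝ), (l : ℝ) - 2) (((iotaB n (j, l - 2)).1 : ℝ), (l : ℝ) + 2))

/-- The path `p` can be raised at `(j,l)`: it is of the form `p' 𝒜_{j,l}⁻¹`. -/
def CanRaise (S : Setting) (i : ℕ) (k : ℤ) (p : List (ℝ × ℝ)) (j : ℕ) (l : ℤ) : Prop :=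
  ∃ p', LoweredTo S i k j l p' p

/-- The monomial group `ℳ`, realised as exponent functions: the free abelian group on the
symbols `Y_{i,k}`, `(i,k) ∈ X`, is identified with finitely supported functions `(ℕ × ℤ) → ℤ`,
written additively. -/
def Y (x : ℕ × ℤ) : (ℕ × ℤ) → ℤ := fun z => if z = x then 1 else 0

noncomputable def ind (s : Prop) : ℤ := @ite ℤ s (Classical.propDecidable s) 1 0

/-- The monomial `m(p)` of a path: `∏ Y_{j,l}` over upper corners times `∏ Y_{j,l}⁻¹`
over lower corners. -/
noncomputable def mon (S : Setting) (p : List (ℝ × ℝ)) : (ℕ × ℤ) → ℤ :=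
  fun x => ind (x ∈ Cp S p true) - ind (x ∈ Cp S p false)

/-- The monomials `A_{j,l}`, with the conventions `Y_{0,·} = Y_{N+1,·} = 1`. -/
def Amon (S : Setting) (j : ℕ) (l : ℤ) : (ℕ × ℤ) → ℤ :=
  match S with
  | .A n =>
      Y (j, l + 1) + Y (j, l - 1) - (if j = 1 then 0 else Y (j - 1, l))
        - (if j = n then 0 else Y (j + 1, l))
  | .B n _ =>
      if j = n then Y (n, l + 1) + Y (n, l - 1) - Y (n - 1, l)
      else if j = n - 1 then
        Y (n - 1, l + 2) + Y (n - 1, l - 2) - (if j = 1 then 0 else Y (n - 2, l))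
          - Y (n, l + 1) - Y (n, l - 1)
      else
        Y (j, l + 2) + Y (j, l - 2) - (if j = 1 then 0 else Y (j - 1, l)) - Y (j + 1, l)

/-- A monomial is dominant iff all its exponents are nonnegative. -/
def Dominant (m : (ℕ × ℤ) → ℤ) : Prop := ∀ x, 0 ≤ m x

/-- A monomial is anti-dominant iff all its exponents are nonpositive. -/
def AntiDominant (m : (ℕ × ℤ) → ℤ) : Prop := ∀ x, m x ≤ 0

/-- `(i',k')` is in snake position with respect to `(i,k)`. -/
def SnakePos : Setting → ℕ × ℤ → ℕ × ℤ → Prop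
  | .A _, ik, ik' => |(ik'.1 : ℤ) - (ik.1 : ℤ)| + 2 ≤ ik'.2 - ik.2
  | .B n _, ik, ik' =>
      if ik.1 = n ∧ ik'.1 = n then
        2 ≤ ik'.2 - ik.2 ∧ (ik'.2 - ik.2) % 4 = 2
      else if ik.1 = n ∨ ik'.1 = n then
        2 * |(ik'.1 : ℤ) - (ik.1 : ℤ)| + 3 ≤ ik'.2 - ik.2 ∧
          (ik'.2 - ik.2) % 4 = (2 * |(ik'.1 : ℤ) - (ik.1 : ℤ)| - 1) % 4
      else
        2 * |(ik'.1 : ℤ) - (ik.1 : ℤ)| + 4 ≤ ik'.2 - ik.2 ∧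
          (ik'.2 - ik.2) % 4 = (2 * |(ik'.1 : ℤ) - (ik.1 : ℤ)|) % 4

/-- A snake: a sequence of points of `X`, each in snake position w.r.t. the previous one. -/
def IsSnake (S : Setting) {T : ℕ} (w : Fin T → ℕ × ℤ) : Prop :=
  (∀ t, w t ∈ X S) ∧
  ∀ (t : Fin T) (h : (t : ℕ) + 1 < T), SnakePos S (w t) (w ⟨(t : ℕ) + 1, h⟩)

/-- `p` is strictly above `p'`. -/
def StrictlyAbove (p p' : List (ℝ × ℝ)) : Prop :=
  ∀ a ∈ p, ∀ b ∈ p', a.1 = b.1 → a.2 < b.2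

/-- A tuple of paths is non-overlapping. -/
def NonOverlapping {T : ℕ} (ps : Fin T → List (ℝ × ℝ)) : Prop :=
  ∀ s t : Fin T, s < t → StrictlyAbove (ps s) (ps t)

/-- The set `𝒫̄` of non-overlapping tuples of paths attached to a snake. -/
def PBar (S : Setting) {T : ℕ} (w : Fin T → ℕ × ℤ) : Set (Fin T → List (ℝ × ℝ)) :=
  {ps | (∀ t, ps t ∈ P S (w t).1 (w t).2) ∧ NonOverlapping ps}

/-- The product `∏_t m(p_t)` of the monomials of a tuple of paths. -/
noncomputable def tmon (S : Setting) {T : ℕ} (ps : Fin T → List (ℝ × ℝ)) : (ℕ × ℤ) → ℤ :=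
  ∑ t, mon S (ps t)

/-- Lowering move at `jl` on a tuple of paths: one component is lowered, the others
are unchanged. -/
def TLoweredTo (S : Setting) {T : ℕ} (w : Fin T → ℕ × ℤ) (jl : ℕ × ℤ)
    (ps ps' : Fin T → List (ℝ × ℝ)) : Prop :=
  ∃ t, LoweredTo S (w t).1 (w t).2 jl.1 jl.2 (ps t) (ps' t) ∧ ∀ s, s ≠ t → ps' s = ps s

/-- Sequences of raising/lowering moves on a single path; the list records, for each move,
whether it was a lowering move (`true`) or a raising move (`false`), and its site. -/
inductive MoveSeq (S : Setting) (i : ℕ) (k : ℤ) :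
    List (ℝ × ℝ) → List (ℝ × ℝ) → List (Bool × (ℕ × ℤ)) → Prop where
  | nil (p : List (ℝ × ℝ)) : MoveSeq S i k p p []
  | lower {p q r : List (ℝ × ℝ)} {jl : ℕ × ℤ} {ms : List (Bool × (ℕ × ℤ))} :
      jl ∈ W S → LoweredTo S i k jl.1 jl.2 p q → MoveSeq S i k q r ms →
      MoveSeq S i k p r ((true, jl) :: ms)
  | raise {p q r : List (ℝ × ℝ)} {jl : ℕ × ℤ} {ms : List (Bool × (ℕ × ℤ))} :
      jl ∈ W S → LoweredTo S i k jl.1 jl.2 q p → MoveSeq S i k q r ms →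
      MoveSeq S i k p r ((false, jl) :: ms)

/-- Sequences of raising/lowering moves on tuples of paths, all of whose intermediate
tuples are non-overlapping. -/
inductive TMoveSeq (S : Setting) {T : ℕ} (w : Fin T → ℕ × ℤ) :
    (Fin T → List (ℝ × ℝ)) → (Fin T → List (ℝ × ℝ)) → List (Bool × (ℕ × ℤ)) → Prop where
  | nil (ps : Fin T → List (ℝ × ℝ)) : TMoveSeq S w ps ps []
  | lower {ps qs rs : Fin T → List (ℝ × ℝ)} {jl : ℕ × ℤ} {ms : List (Bool × (ℕ × ℤ))} :
      jl ∈ W S → TLoweredTo S w jl ps qs → NonOverlapping qs →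
      TMoveSeq S w qs rs ms → TMoveSeq S w ps rs ((true, jl) :: ms)
  | raise {ps qs rs : Fin T → List (ℝ × ℝ)} {jl : ℕ × ℤ} {ms : List (Bool × (ℕ × ℤ))} :
      jl ∈ W S → TLoweredTo S w jl qs ps → NonOverlapping qs →
      TMoveSeq S w qs rs ms → TMoveSeq S w ps rs ((false, jl) :: ms)

/-- Sequences of lowering moves on tuples of paths, all of whose intermediate tuples
are non-overlapping; the list records the sites, in order. -/
inductive TLowerSeq (S : Setting) {T : ℕ} (w : Fin T → ℕ × ℤ) :
    (Fin T → List (ℝ × ℝ)) → (Fin T → List (ℝ × ℝ)) → List (ℕ × ℤ) → Prop where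
  | nil (ps : Fin T → List (ℝ × ℝ)) : TLowerSeq S w ps ps []
  | cons {ps qs rs : Fin T → List (ℝ × ℝ)} {jl : ℕ × ℤ} {ms : List (ℕ × ℤ)} :
      jl ∈ W S → TLoweredTo S w jl ps qs → NonOverlapping qs →
      TLowerSeq S w qs rs ms → TLowerSeq S w ps rs (jl :: ms)

/-- Weak order on paths with the same x-coordinates: `p` is weakly above `p'`. -/
def WeaklyAbove (p p' : List (ℝ × ℝ)) : Prop :=
  p.length = p'.length ∧ ∀ r, r < p.length → (pt p r).2 ≤ (pt p' r).2

/-- `p` is weakly below `p'`. -/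
def WeaklyBelow (p p' : List (ℝ × ℝ)) : Prop :=
  p.length = p'.length ∧ ∀ r, r < p.length → (pt p' r).2 ≤ (pt p r).2

/-- The path `top(p, p')`. -/
def topPath (p p' : List (ℝ × ℝ)) : List (ℝ × ℝ) :=
  List.zipWith (fun a b => (a.1, min a.2 b.2)) p p'

/-- The distinguished point contained in the highest path `p⁺_{i,k}`. -/
def highPoint : Setting → ℕ → ℤ → ℝ × ℝ
  | .A _, i, k => ((i : ℝ), (k : ℝ))
  | .B n ε, i, k =>
      if i = n then (2 * (n : ℝ) - 1, (k : ℝ) - ε)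
      else (((iotaB n (i, k)).1 : ℝ), ((iotaB n (i, k)).2 : ℝ))

/-- The distinguished point contained in the lowest path `p⁻_{i,k}`. -/
def lowPoint : Setting → ℕ → ℤ → ℝ × ℝ
  | .A n, i, k => ((n : ℝ) + 1 - (i : ℝ), (k : ℝ) + (n : ℝ) + 1)
  | .B n ε, i, k =>
      if i = n then (2 * (n : ℝ) - 1, (k : ℝ) + 4 * (n : ℝ) - 2 + ε)
      else (((iotaB n (i, k + 4 * (n : ℤ) - 2)).1 : ℝ),
            ((iotaB n (i, k + 4 * (n : ℤ) - 2)).2 : ℝ))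

/-- The highest path `p⁺_{i,k}` : the path of `𝒫_{i,k}` with no lower corners. -/
noncomputable def highestPath (S : Setting) (i : ℕ) (k : ℤ) : List (ℝ × ℝ) :=
  Classical.epsilon fun p => p ∈ P S i k ∧ Cp S p false = ∅

/-- The lowest path `p⁻_{i,k}` : the path of `𝒫_{i,k}` with no upper corners. -/
noncomputable def lowestPath (S : Setting) (i : ℕ) (k : ℤ) : List (ℝ × ℝ) :=
  Classical.epsilon fun p => p ∈ P S i k ∧ Cp S p true = ∅



theorem ind_true {s : Prop} (h : s) : ind s = 1 := by simp [ind, h]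
theorem ind_false {s : Prop} (h : ¬ s) : ind s = 0 := by simp [ind, h]
theorem ind_nonneg (s : Prop) : 0 ≤ ind s := by
  by_cases h : s <;> simp [ind, h]
theorem ind_congr {s t : Prop} (h : s ↔ t) : ind s = ind t := by rw [propext h]
theorem ind_mono {s t : Prop} (h : s → t) : ind s ≤ ind t := by
  by_cases hs : s
  · rw [ind_true hs, ind_true (h hs)]
  · rw [ind_false hs]; exact ind_nonneg t
theorem ind_pos {s : Prop} (h : 0 < ind s) : s := by
  by_contra hs; rw [ind_false hs] at h; exact lt_irrefl _ h

/-- Weight of a point. -/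
noncomputable def wt (cls : ℝ × ℝ → ℕ × ℤ → Prop) (a : ℝ × ℝ) (x : ℕ × ℤ) : ℤ :=
  ind (cls a x ∧ a.2 < (x.2 : ℝ))

noncomputable def fs (cls : ℝ × ℝ → ℕ × ℤ → Prop) (p : List (ℝ × ℝ)) (x : ℕ × ℤ) : ℤ :=
  (p.map fun a => wt cls a x).sum

noncomputable def cap (cls : ℝ × ℝ → ℕ × ℤ → Prop) (p : List (ℝ × ℝ)) (x : ℕ × ℤ) : ℤ :=
  (p.map fun a => ind (cls a x)).sum

theorem sum_range_pt (g : ℝ × ℝ → ℤ) (p : List (ℝ × ℝ)) :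
    (p.map g).sum = ∑ r ∈ Finset.range p.length, g (pt p r) := by
  induction p with
  | nil => simp
  | cons a p ih =>
    rw [List.map_cons, List.sum_cons, List.length_cons, Finset.sum_range_succ', ih, add_comm]
    rfl

theorem pt_mem {p : List (ℝ × ℝ)} {r : ℕ} (h : r < p.length) : pt p r ∈ p := by
  unfold pt; rw [List.getD_eq_getElem _ _ h]; exact List.getElem_mem h

theorem mem_pt {p : List (ℝ × ℝ)} {a : ℝ × ℝ} (h : a ∈ p) : ∃ r, r < p.length ∧ pt p r = a := by
  obtain ⟨r, hr, rfl⟩ := List.mem_iff_getElem.1 h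
  exact ⟨r, hr, by unfold pt; rw [List.getD_eq_getElem _ _ hr]⟩

theorem list_ext_pt {p q : List (ℝ × ℝ)} (hl : p.length = q.length)
    (h : ∀ r, r < p.length → pt p r = pt q r) : p = q := by
  apply List.ext_getElem hl
  intro r h1 h2
  have := h r h1
  unfold pt at this
  rwa [List.getD_eq_getElem _ _ h1, List.getD_eq_getElem _ _ h2] at this

theorem sum_replace1 {p p' : List (ℝ × ℝ)} {q q' : ℝ × ℝ} (h : Replace1 p p' q q')
    (g : ℝ × ℝ → ℤ) : (p'.map g).sum = (p.map g).sum - g q + g q' := by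
  obtain ⟨r, hr, h1, hl, h2, h3⟩ := h
  rw [sum_range_pt, sum_range_pt, hl]
  have hm : r ∈ Finset.range p.length := Finset.mem_range.2 hr
  rw [← Finset.add_sum_erase _ _ hm, ← Finset.add_sum_erase (a := r) _ (fun i => g (pt p i)) hm]
  have : ∑ x ∈ (Finset.range p.length).erase r, g (pt p' x)
      = ∑ x ∈ (Finset.range p.length).erase r, g (pt p x) := by
    apply Finset.sum_congr rfl
    intro x hx
    rw [Finset.mem_erase, Finset.mem_range] at hx
    rw [h3 x hx.2 hx.1]
  rw [this, h1, h2]; ring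

theorem sum_replace2 {p p' : List (ℝ × ℝ)} {q1 q1' q2 q2' : ℝ × ℝ}
    (h : Replace2 p p' q1 q1' q2 q2')
    (g : ℝ × ℝ → ℤ) :
    (p'.map g).sum = (p.map g).sum - g q1 + g q1' - g q2 + g q2' := by
  obtain ⟨r, s, hr, hs, hrs, h1, h2, hl, h1', h2', h3⟩ := h
  rw [sum_range_pt, sum_range_pt, hl]
  have hm : r ∈ Finset.range p.length := Finset.mem_range.2 hr
  have hm2 : s ∈ (Finset.range p.length).erase r :=
    Finset.mem_erase.2 ⟨hrs.symm, Finset.mem_range.2 hs⟩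
  rw [← Finset.add_sum_erase _ _ hm, ← Finset.add_sum_erase (a := r) _ (fun i => g (pt p i)) hm,
    ← Finset.add_sum_erase _ _ hm2, ← Finset.add_sum_erase (a := s) _ (fun i => g (pt p i)) hm2]
  have : ∑ x ∈ ((Finset.range p.length).erase r).erase s, g (pt p' x)
      = ∑ x ∈ ((Finset.range p.length).erase r).erase s, g (pt p x) := by
    apply Finset.sum_congr rfl
    intro x hx
    rw [Finset.mem_erase, Finset.mem_erase, Finset.mem_range] at hx
    rw [h3 x hx.2.2 hx.2.1 hx.1]
  rw [this, h1, h2, h1', h2']; ring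

/-- The data needed for the abstract argument. -/
structure Model (S : Setting) where
  cls : ℝ × ℝ → ℕ × ℤ → Prop
  L : ((ℕ × ℤ) → ℤ) →+ ((ℕ × ℤ) → ℤ)
  cls_col : ∀ a b x, cls a x → cls b x → a.1 = b.1
  Ldelta : ∀ x ∈ W S, Amon S x.1 x.2 = L (Y x)
  Linj : ∀ v : (ℕ × ℤ) → ℤ, (∀ x, x ∉ W S → v x = 0) →
    (∃ B : ℤ, ∀ x : ℕ × ℤ, x.2 < B → v x = 0) → L v = 0 → v = 0
  mon_eq : ∀ x ∈ X S, ∀ p ∈ P S x.1 x.2, mon S p = L (fs cls p)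
  low : ∀ x ∈ X S, ∀ y ∈ W S, ∀ p q, LoweredTo S x.1 x.2 y.1 y.2 p q →
    fs cls q = fs cls p - Y y
  len : ∀ x ∈ X S, ∀ p ∈ P S x.1 x.2, ∀ q ∈ P S x.1 x.2, p.length = q.length
  xco : ∀ x ∈ X S, ∀ p ∈ P S x.1 x.2, ∀ q ∈ P S x.1 x.2, ∀ r, r < p.length →
    (pt p r).1 = (pt q r).1
  clse : ∀ x ∈ X S, ∀ p ∈ P S x.1 x.2, ∀ q ∈ P S x.1 x.2, ∀ r, r < p.length → ∀ z,
    cls (pt p r) z → cls (pt q r) z ∧ (z ∈ W S ∨ pt p r = pt q r)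
  ex : ∀ x ∈ X S, ∀ p ∈ P S x.1 x.2, ∀ q ∈ P S x.1 x.2, WeaklyAbove p q → p ≠ q →
    ∃ y ∈ W S, ∃ p', LoweredTo S x.1 x.2 y.1 y.2 p p' ∧ WeaklyAbove p' q
  mono : ∀ x ∈ X S, ∀ p ∈ P S x.1 x.2, ∀ q ∈ P S x.1 x.2,
    (∀ z, fs cls q z ≤ fs cls p z) → WeaklyAbove p q

namespace Model

variable {S : Setting} (M : Model S)

theorem LT_mem {i : ℕ} {k : ℤ} {j : ℕ} {l : ℤ} {p q : List (ℝ × ℝ)}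
    (h : LoweredTo S i k j l p q) : p ∈ P S i k ∧ q ∈ P S i k := ⟨h.1, h.2.1⟩

theorem fs_mono {x : ℕ × ℤ} (hx : x ∈ X S) {p q : List (ℝ × ℝ)} (hp : p ∈ P S x.1 x.2)
    (hq : q ∈ P S x.1 x.2) (h : WeaklyAbove p q) (z : ℕ × ℤ) : fs M.cls q z ≤ fs M.cls p z := by
  unfold fs
  rw [sum_range_pt, sum_range_pt, ← h.1]
  apply Finset.sum_le_sum
  intro r hr
  rw [Finset.mem_range] at hr
  apply ind_mono
  rintro ⟨h1, h2⟩
  exact ⟨(M.clse x hx q hq p hp r (h.1 ▸ hr) z h1).1, lt_of_le_of_lt (h.2 r hr) h2⟩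

theorem cap_eq {x : ℕ × ℤ} (hx : x ∈ X S) {p q : List (ℝ × ℝ)} (hp : p ∈ P S x.1 x.2)
    (hq : q ∈ P S x.1 x.2) (z : ℕ × ℤ) : cap M.cls q z = cap M.cls p z := by
  unfold cap
  have hl := M.len x hx p hp q hq
  rw [sum_range_pt, sum_range_pt, ← hl]
  apply Finset.sum_congr rfl
  intro r hr
  rw [Finset.mem_range] at hr
  exact ind_congr ⟨fun h => (M.clse x hx q hq p hp r (hl ▸ hr) z h).1,
    fun h => (M.clse x hx p hp q hq r hr z h).1⟩

theorem fs_off {x : ℕ × ℤ} (hx : x ∈ X S) {p q : List (ℝ × ℝ)} (hp : p ∈ P S x.1 x.2)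
    (hq : q ∈ P S x.1 x.2) (z : ℕ × ℤ) (hz : z ∉ W S) : fs M.cls q z = fs M.cls p z := by
  unfold fs
  have hl := M.len x hx p hp q hq
  rw [sum_range_pt, sum_range_pt, ← hl]
  apply Finset.sum_congr rfl
  intro r hr
  rw [Finset.mem_range] at hr
  unfold wt
  by_cases h : M.cls (pt p r) z
  · have := (M.clse x hx p hp q hq r hr z h).2.resolve_left hz
    rw [this]
  · have h' : ¬ M.cls (pt q r) z := fun h' => h (M.clse x hx q hq p hp r (hl ▸ hr) z h').1
    rw [ind_false (fun hh => h' hh.1), ind_false (fun hh => h hh.1)]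

theorem fs_le_cap (cls) (p : List (ℝ × ℝ)) (z : ℕ × ℤ) : fs cls p z ≤ cap cls p z := by
  unfold fs cap
  rw [sum_range_pt, sum_range_pt]
  exact Finset.sum_le_sum fun r _ => ind_mono fun h => h.1

theorem fs_nonneg (cls) (p : List (ℝ × ℝ)) (z : ℕ × ℤ) : 0 ≤ fs cls p z := by
  unfold fs
  rw [sum_range_pt]
  exact Finset.sum_nonneg fun r _ => ind_nonneg _

theorem fs_bdd (cls) (p : List (ℝ × ℝ)) : ∃ B : ℤ, ∀ z : ℕ × ℤ, z.2 < B → fs cls p z = 0 := by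
  induction p with
  | nil => exact ⟨0, fun z _ => by simp [fs]⟩
  | cons a p ih =>
    obtain ⟨B, hB⟩ := ih
    refine ⟨min B ⌊a.2⌋, fun z hz => ?_⟩
    have h1 := hB z (lt_of_lt_of_le hz (min_le_left _ _))
    have h2 := lt_of_lt_of_le hz (min_le_right _ _)
    have h3 : (z.2 : ℝ) ≤ a.2 := (Int.cast_le.2 h2.le).trans (Int.floor_le _)
    unfold fs at h1 ⊢
    rw [List.map_cons, List.sum_cons, h1]
    unfold wt
    rw [ind_false (fun h => absurd h.2 (not_lt.2 h3))]; rfl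

theorem fs_above {p q : List (ℝ × ℝ)} (h : StrictlyAbove p q) (z : ℕ × ℤ)
    (hq : 0 < fs M.cls q z) : fs M.cls p z = cap M.cls p z := by
  have : ∃ b ∈ q, M.cls b z ∧ b.2 < (z.2 : ℝ) := by
    by_contra hc
    push Not at hc
    have : fs M.cls q z = 0 := by
      unfold fs
      apply List.sum_eq_zero
      intro y hy
      obtain ⟨b, hb, rfl⟩ := List.mem_map.1 hy
      exact ind_false fun hh => absurd hh.2 (not_lt.2 (hc b hb hh.1))
    omega
  obtain ⟨b, hb, hb1, hb2⟩ := this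
  unfold fs cap
  congr 1
  apply List.map_congr_left
  intro a ha
  exact ind_congr ⟨fun hh => hh.1, fun hh =>
    ⟨hh, (h a ha b hb (M.cls_col a b z hh hb1)).trans hb2⟩⟩

variable {T : ℕ}

noncomputable def F (ps : Fin T → List (ℝ × ℝ)) : (ℕ × ℤ) → ℤ := ∑ t, fs M.cls (ps t)

theorem F_apply (ps : Fin T → List (ℝ × ℝ)) (z) : M.F ps z = ∑ t, fs M.cls (ps t) z := by
  simp [F]

theorem tmon_eq {w : Fin T → ℕ × ℤ} (hw : ∀ t, w t ∈ X S) {ps : Fin T → List (ℝ × ℝ)}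
    (h : ∀ t, ps t ∈ P S (w t).1 (w t).2) : tmon S ps = M.L (M.F ps) := by
  unfold tmon F
  rw [map_sum]
  exact Finset.sum_congr rfl fun t _ => M.mon_eq _ (hw t) _ (h t)

theorem comp_le {w : Fin T → ℕ × ℤ} (hw : ∀ t, w t ∈ X S) {ps ps' : Fin T → List (ℝ × ℝ)}
    (h : ps ∈ PBar S w) (h' : ps' ∈ PBar S w) (hle : ∀ z, M.F ps' z ≤ M.F ps z) (t : Fin T)
    (z : ℕ × ℤ) : fs M.cls (ps' t) z ≤ fs M.cls (ps t) z := by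
  by_contra hc
  push Not at hc
  have := hle z
  rw [F_apply, F_apply] at this
  refine absurd this (not_le.2 ?_)
  have hcap : ∀ s, cap M.cls (ps' s) z = cap M.cls (ps s) z := fun s =>
    M.cap_eq (hw s) (h.1 s) (h'.1 s) z
  apply Finset.sum_lt_sum
  · intro s _
    rcases lt_trichotomy s t with hs | rfl | hs
    · have : fs M.cls (ps' s) z = cap M.cls (ps' s) z :=
        M.fs_above (h'.2 s t hs) z (lt_of_le_of_lt (fs_nonneg _ _ _) hc)
      rw [this, hcap]
      exact fs_le_cap _ _ _
    · exact hc.le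
    · have : fs M.cls (ps s) z = 0 := by
        by_contra h0
        have h1 := M.fs_above (h.2 t s hs) z (lt_of_le_of_ne (fs_nonneg _ _ _) (Ne.symm h0))
        have h2 := fs_le_cap M.cls (ps' t) z
        rw [hcap] at h2
        omega
      rw [this]; exact fs_nonneg _ _ _
  · exact ⟨t, Finset.mem_univ _, hc⟩

theorem lower_F {w : Fin T → ℕ × ℤ} (hw : ∀ t, w t ∈ X S) {y : ℕ × ℤ} (hy : y ∈ W S)
    {ps qs : Fin T → List (ℝ × ℝ)} (h : TLoweredTo S w y ps qs) : M.F qs = M.F ps - Y y := by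
  obtain ⟨t, h1, h2⟩ := h
  unfold F
  rw [← Finset.add_sum_erase _ _ (Finset.mem_univ t),
    ← Finset.add_sum_erase (a := t) _ (fun t => fs M.cls (ps t)) (Finset.mem_univ t)]
  have : ∑ x ∈ Finset.univ.erase t, fs M.cls (qs x) = ∑ x ∈ Finset.univ.erase t, fs M.cls (ps x) :=
    Finset.sum_congr rfl fun s hs => by rw [h2 s (Finset.ne_of_mem_erase hs)]
  rw [this, M.low _ (hw t) y hy _ _ h1]
  abel

theorem lower_tmon (M : Model S) {w : Fin T → ℕ × ℤ} (hw : ∀ t, w t ∈ X S) {y : ℕ × ℤ} (hy : y ∈ W S)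
    {ps qs : Fin T → List (ℝ × ℝ)} (h : TLoweredTo S w y ps qs) :
    tmon S qs = tmon S ps - Amon S y.1 y.2 := by
  obtain ⟨t, h1, h2⟩ := h
  unfold tmon
  rw [← Finset.add_sum_erase _ _ (Finset.mem_univ t),
    ← Finset.add_sum_erase (a := t) _ (fun t => mon S (ps t)) (Finset.mem_univ t)]
  have : ∑ x ∈ Finset.univ.erase t, mon S (qs x) = ∑ x ∈ Finset.univ.erase t, mon S (ps x) :=
    Finset.sum_congr rfl fun s hs => by rw [h2 s (Finset.ne_of_mem_erase hs)]
  rw [this, M.mon_eq _ (hw t) _ h1.1, M.mon_eq _ (hw t) _ h1.2.1, M.low _ (hw t) y hy _ _ h1,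
    map_sub, M.Ldelta y hy]
  abel

theorem seq_tmon (M : Model S) {w : Fin T → ℕ × ℤ} (hw : ∀ t, w t ∈ X S)
    {ps qs : Fin T → List (ℝ × ℝ)} {ms : List (ℕ × ℤ)} (h : TLowerSeq S w ps qs ms) :
    tmon S qs = tmon S ps - (ms.map fun y => Amon S y.1 y.2).sum := by
  induction h with
  | nil ps => simp
  | cons hy hl _ _ ih =>
    rw [ih, M.lower_tmon hw hy hl, List.map_cons, List.sum_cons]; abel

theorem exists_lower {w : Fin T → ℕ × ℤ} (hw : ∀ t, w t ∈ X S) {ps ps' : Fin T → List (ℝ × ℝ)}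
    (h : ps ∈ PBar S w) (h' : ps' ∈ PBar S w) (hle : ∀ z, M.F ps' z ≤ M.F ps z) (hne : ps ≠ ps') :
    ∃ y ∈ W S, ∃ qs ∈ PBar S w, TLoweredTo S w y ps qs ∧ ∀ z, M.F ps' z ≤ M.F qs z := by
  classical
  have hc := M.comp_le hw h h' hle
  have hwa : ∀ t, WeaklyAbove (ps t) (ps' t) := fun t =>
    M.mono _ (hw t) _ (h.1 t) _ (h'.1 t) (hc t)
  obtain ⟨t0, ht0⟩ := Function.ne_iff.1 hne
  have hn : (Finset.univ.filter fun t => ps t ≠ ps' t).Nonempty :=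
    ⟨t0, by simpa using ht0⟩
  obtain ⟨t, ht, hmax⟩ := Finset.exists_max_image _ id hn
  rw [Finset.mem_filter] at ht
  have hmax' : ∀ s, t < s → ps s = ps' s := by
    intro s hs
    by_contra hne
    exact absurd (hmax s (by simpa using hne)) (not_le.2 hs)
  obtain ⟨y, hy, q, hl, hq⟩ := M.ex _ (hw t) _ (h.1 t) _ (h'.1 t) (hwa t) ht.2
  have hqP := hl.2.1
  have hlow := M.low _ (hw t) y hy _ _ hl
  have hpq : WeaklyAbove (ps t) q := by
    apply M.mono _ (hw t) _ (h.1 t) _ hqP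
    intro z
    rw [hlow]
    simp only [Pi.sub_apply, Y]
    split_ifs <;> omega
  have hTL : TLoweredTo S w y ps (Function.update ps t q) :=
    ⟨t, by simpa using hl, fun s hs => by simp [hs]⟩
  refine ⟨y, hy, Function.update ps t q, ⟨?_, ?_⟩, hTL, ?_⟩
  · intro s
    by_cases hs : s = t
    · subst hs; simpa using hqP
    · simpa [hs] using h.1 s
  · intro s u hsu
    by_cases hs : s = t
    · subst hs
      have hu : u ≠ s := hsu.ne'
      simp only [Function.update_self, Function.update_of_ne hu]
      intro a ha b hb hab
      obtain ⟨r, hr, rfl⟩ := mem_pt ha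
      rw [hmax' u hsu] at hb
      have hr' : r < (ps' s).length := hq.1 ▸ hr
      refine lt_of_le_of_lt (hq.2 r hr) (h'.2 s u hsu _ (pt_mem hr') b hb ?_)
      rw [← hab]
      exact (M.xco _ (hw s) _ hqP _ (h'.1 s) r hr).symm
    · by_cases hu : u = t
      · subst hu
        simp only [Function.update_self, Function.update_of_ne hs]
        intro a ha b hb hab
        obtain ⟨r, hr, rfl⟩ := mem_pt hb
        have hr' : r < (ps u).length := hpq.1 ▸ hr
        refine lt_of_lt_of_le (h.2 s u hsu a ha _ (pt_mem hr') ?_) (hpq.2 r hr')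
        rw [hab]
        exact (M.xco _ (hw u) _ (h.1 u) _ hqP r hr').symm
      · simp only [Function.update_of_ne hs, Function.update_of_ne hu]
        exact h.2 s u hsu
  · intro z
    rw [F_apply, F_apply]
    apply Finset.sum_le_sum
    intro s _
    by_cases hs : s = t
    · subst hs
      simp only [Function.update_self]
      exact M.fs_mono (hw s) hqP (h'.1 s) hq z
    · simp only [Function.update_of_ne hs]
      exact hc s z

theorem sumY_apply (ms : List (ℕ × ℤ)) (z : ℕ × ℤ) : (ms.map Y).sum z = ms.count z := by
  induction ms with
  | nil => simp
  | cons a ms ih =>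
    rw [List.map_cons, List.sum_cons, Pi.add_apply, ih, List.count_cons]
    simp only [Y, beq_iff_eq]
    by_cases h : z = a
    · simp [h, add_comm]
    · simp [h, Ne.symm h]

theorem build {w : Fin T → ℕ × ℤ} (hw : ∀ t, w t ∈ X S) (ps' : Fin T → List (ℝ × ℝ))
    (h' : ps' ∈ PBar S w) (m : ℕ) : ∀ (ps : Fin T → List (ℝ × ℝ)), ps ∈ PBar S w →
    ∀ ms : List (ℕ × ℤ), ms.length = m → M.F ps - M.F ps' = (ms.map Y).sum →
    ∃ ms', ms'.Perm ms ∧ TLowerSeq S w ps ps' ms' := by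
  induction m with
  | zero =>
    intro ps h ms hm hF
    have hms : ms = [] := List.length_eq_zero_iff.1 hm
    subst hms
    have hF' : M.F ps = M.F ps' := by simpa [sub_eq_zero] using hF
    have : ps = ps' := by
      by_contra hne
      obtain ⟨y, hy, qs, hqs, hl, hle⟩ := M.exists_lower hw h h' (fun z => by rw [hF']) hne
      have h1 := hle y
      rw [M.lower_F hw hy hl, hF'] at h1
      simp [Y] at h1
    subst this
    exact ⟨[], List.Perm.refl _, TLowerSeq.nil _⟩
  | succ m ih =>
    intro ps h ms hm hF
    have hz : ∀ z, M.F ps z - M.F ps' z = ms.count z := fun z => by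
      have := congrFun hF z
      rw [sumY_apply] at this
      exact this
    have hne : ps ≠ ps' := by
      rintro rfl
      cases ms with
      | nil => simp at hm
      | cons a ms =>
        have := hz a
        simp at this
        omega
    obtain ⟨y, hy, qs, hqs, hl, hle⟩ := M.exists_lower hw h h' (fun z => by
      have := hz z; omega) hne
    have hFq := M.lower_F hw hy hl
    have hmem : y ∈ ms := by
      by_contra hn
      have h1 := hle y
      have h2 := hz y
      rw [List.count_eq_zero_of_not_mem hn] at h2
      rw [hFq] at h1
      simp [Y] at h1
      simp at h2
      omega
    have hp := List.perm_cons_erase hmem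
    obtain ⟨ms', hms', hs⟩ := ih qs hqs (ms.erase y) (by rw [List.length_erase_of_mem hmem]; omega) (by
      have := (hp.map Y).sum_eq
      rw [List.map_cons, List.sum_cons] at this
      rw [hFq]
      have e : M.F ps - Y y - M.F ps' = M.F ps - M.F ps' - Y y := by abel
      rw [e, hF, this]; abel)
    exact ⟨y :: ms', (hms'.cons y).trans hp.symm, TLowerSeq.cons hy hl hqs.2 hs⟩

theorem perm_of_list {R : ℕ} {α : Type*} (f : Fin R → α) (l : List α)
    (h : l.Perm (List.ofFn f)) : ∃ σ : Equiv.Perm (Fin R), l = List.ofFn fun r => f (σ r) := by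
  classical
  have hlen : l.length = R := by simpa using h.length_eq
  subst hlen
  have h2 : List.Perm (List.ofFn l.get) (List.ofFn f) := by rwa [List.ofFn_get]
  have hcard : ∀ a, Fintype.card {r // l.get r = a} = Fintype.card {r // f r = a} := by
    intro a
    have key : ∀ g : Fin l.length → α, (List.ofFn g).count a = Fintype.card {r // g r = a} := by
      intro g
      rw [Fintype.card_subtype, List.count_eq_countP, List.ofFn_eq_map, List.countP_map,
        List.countP_eq_length_filter]
      rw [← List.toFinset_card_of_nodup ((List.nodup_finRange _).filter _)]
      congr 1
      ext r
      simp
    rw [← key, ← key]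
    exact h2.count_eq a
  have he : ∀ a, Nonempty ({r // l.get r = a} ≃ {r // f r = a}) := fun a =>
    ⟨Fintype.equivOfCardEq (hcard a)⟩
  let e := fun a => Classical.choice (he a)
  let σ : Equiv.Perm (Fin l.length) :=
    (Equiv.sigmaFiberEquiv l.get).symm.trans
      ((Equiv.sigmaCongrRight e).trans (Equiv.sigmaFiberEquiv f))
  refine ⟨σ, ?_⟩
  have : (fun r => f (σ r)) = l.get := by
    funext r
    exact (e (l.get r) ⟨r, rfl⟩).2
  rw [this, List.ofFn_get]

theorem main (M : Model S) (w : Fin T → ℕ × ℤ) (hw : IsSnake S w)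
    (R : ℕ) (jl : Fin R → ℕ × ℤ) (hjl : ∀ r, jl r ∈ W S)
    (ps ps' : Fin T → List (ℝ × ℝ)) (hps : ps ∈ PBar S w) (hps' : ps' ∈ PBar S w) :
    (tmon S ps' = tmon S ps - ∑ r, Amon S (jl r).1 (jl r).2) ↔
    (∃ σ : Equiv.Perm (Fin R),
      TLowerSeq S w ps ps' (List.ofFn fun r => jl (σ r))) := by
  have hX := hw.1
  constructor
  · intro h
    have hsum : (∑ r, Y (jl r)) = ((List.ofFn jl).map Y).sum := by
      rw [List.map_ofFn, List.sum_ofFn]; rfl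
    have hF : M.F ps - M.F ps' - ∑ r, Y (jl r) = 0 := by
      apply M.Linj
      · intro x hx
        rw [Pi.sub_apply, Pi.sub_apply, F_apply, F_apply]
        have h1 : ∀ r, Y (jl r) x = 0 := fun r => by
          unfold Y
          rw [if_neg]
          rintro rfl
          exact hx (hjl r)
        have h2 : (∑ r, Y (jl r)) x = 0 := by
          rw [Finset.sum_apply]; exact Finset.sum_eq_zero fun r _ => h1 r
        rw [h2, Finset.sum_congr rfl fun t _ => M.fs_off (hX t) (hps'.1 t) (hps.1 t) x hx]
        simp
      · choose B hB using fun t => fs_bdd M.cls (ps t)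
        choose B' hB' using fun t => fs_bdd M.cls (ps' t)
        obtain ⟨b, hb⟩ : ∃ b : ℤ, ∀ t, b ≤ B t := by
          obtain ⟨b, hb⟩ := (Set.finite_range B).bddBelow
          exact ⟨b, fun t => hb ⟨t, rfl⟩⟩
        obtain ⟨b', hb'⟩ : ∃ b : ℤ, ∀ t, b ≤ B' t := by
          obtain ⟨b, hb⟩ := (Set.finite_range B').bddBelow
          exact ⟨b, fun t => hb ⟨t, rfl⟩⟩
        obtain ⟨c, hc⟩ : ∃ b : ℤ, ∀ r, b ≤ (jl r).2 := by
          obtain ⟨b, hb⟩ := (Set.finite_range fun r => (jl r).2).bddBelow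
          exact ⟨b, fun t => hb ⟨t, rfl⟩⟩
        refine ⟨min (min b b') c, fun x hx => ?_⟩
        rw [lt_min_iff, lt_min_iff] at hx
        rw [Pi.sub_apply, Pi.sub_apply, F_apply, F_apply, Finset.sum_apply,
          Finset.sum_eq_zero fun t _ => hB t x (hx.1.1.trans_le (hb t)),
          Finset.sum_eq_zero fun t _ => hB' t x (hx.1.2.trans_le (hb' t)),
          Finset.sum_eq_zero]
        · rfl
        · intro r _
          unfold Y
          rw [if_neg]
          rintro rfl
          have := hc r
          omega
      · rw [map_sub, map_sub, map_sum, ← M.tmon_eq hX hps.1, ← M.tmon_eq hX hps'.1, h,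
          Finset.sum_congr rfl fun r _ => (M.Ldelta _ (hjl r)).symm]
        abel
    obtain ⟨ms', hp, hs⟩ := M.build hX ps' hps' _ ps hps (List.ofFn jl) rfl (by
      rw [← hsum]; exact sub_eq_zero.1 hF)
    obtain ⟨σ, hσ⟩ := perm_of_list jl ms' hp
    exact ⟨σ, hσ ▸ hs⟩
  · rintro ⟨σ, h⟩
    rw [M.seq_tmon hX h, List.map_ofFn, List.sum_ofFn]
    congr 1
    exact Equiv.sum_comp σ (fun r => Amon S (jl r).1 (jl r).2)

end Model


theorem pt_map_range (m : ℕ) (g : ℕ → ℝ × ℝ) {r : ℕ} (h : r < m) :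
    pt ((List.range m).map g) r = g r := by
  unfold pt
  rw [List.getD_eq_getElem _ _ (by simpa using h)]
  simp

theorem fs_map (cls) (m : ℕ) (g : ℕ → ℝ × ℝ) (x : ℕ × ℤ) (j : ℕ)
    (h : ∀ r, r < m → r ≠ j → ¬ cls (g r) x) :
    fs cls ((List.range m).map g) x = ind (j < m ∧ cls (g j) x ∧ (g j).2 < (x.2 : ℝ)) := by
  unfold fs
  rw [sum_range_pt, List.length_map, List.length_range]
  rw [Finset.sum_congr rfl (g := fun r => wt cls (g r) x) (fun r hr => by
    rw [pt_map_range _ _ (Finset.mem_range.1 hr)])]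
  by_cases hj : j < m
  · rw [Finset.sum_eq_single_of_mem j (Finset.mem_range.2 hj)]
    · exact ind_congr (by simp [hj])
    · intro r hr hne
      exact ind_false fun hh => h r (Finset.mem_range.1 hr) hne hh.1
  · rw [ind_false (fun hh => hj hh.1)]
    apply Finset.sum_eq_zero
    intro r hr
    have := Finset.mem_range.1 hr
    exact ind_false fun hh => h r this (by omega) hh.1

namespace TA

noncomputable def mk (n : ℕ) (y : ℕ → ℤ) : List (ℝ × ℝ) :=
  (List.range (n + 2)).map fun r : ℕ => ((r : ℝ), (y r : ℝ))

theorem pt_mk (n : ℕ) (y : ℕ → ℤ) {r : ℕ} (h : r < n + 2) : pt (mk n y) r = ((r : ℝ), (y r : ℝ)) :=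
  pt_map_range _ _ h

theorem len_mk (n y) : (mk n y).length = n + 2 := by simp [mk]

structure AI (n i : ℕ) (k : ℤ) (y : ℕ → ℤ) : Prop where
  y0 : y 0 = i + k
  y1 : y (n + 1) = n + 1 - i + k
  st : ∀ r, r ≤ n → y (r + 1) = y r + 1 ∨ y (r + 1) = y r - 1

theorem mem_iff {n i : ℕ} {k : ℤ} {p : List (ℝ × ℝ)} :
    p ∈ pathsA n i k ↔ ∃ y, AI n i k y ∧ p = mk n y := by
  constructor
  · rintro ⟨hl, hx, h0, h1, hst⟩
    have hz : ∀ r, r < n + 2 → ∃ z : ℤ, (pt p r).2 = z := by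
      intro r
      induction r with
      | zero => intro _; exact ⟨i + k, by rw [h0]; push_cast; rfl⟩
      | succ r ih =>
        intro hr
        obtain ⟨z, hz⟩ := ih (by omega)
        rcases hst r (by omega) with h | h
        · exact ⟨z + 1, by push_cast; linarith⟩
        · exact ⟨z - 1, by push_cast; linarith⟩
    have hz' : ∀ r, ∃ z : ℤ, r < n + 2 → (pt p r).2 = z := fun r => by
      by_cases h : r < n + 2
      · obtain ⟨z, hz⟩ := hz r h; exact ⟨z, fun _ => hz⟩
      · exact ⟨0, fun h' => absurd h' h⟩
    choose y hy using hz'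
    refine ⟨y, ⟨?_, ?_, ?_⟩, ?_⟩
    · rw [hy 0 (by omega)] at h0; exact_mod_cast h0
    · rw [hy (n+1) (by omega)] at h1; exact_mod_cast h1
    · intro r hr
      have := hst r hr
      rw [hy r (by omega), hy (r+1) (by omega)] at this
      rcases this with h | h
      · left
        have : ((y (r+1) : ℤ) : ℝ) = ((y r + 1 : ℤ) : ℝ) := by push_cast; linarith
        exact_mod_cast this
      · right
        have : ((y (r+1) : ℤ) : ℝ) = ((y r - 1 : ℤ) : ℝ) := by push_cast; linarith
        exact_mod_cast this
    · apply list_ext_pt (by rw [hl, len_mk])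
      intro r hr
      rw [hl] at hr
      rw [pt_mk n y hr]
      exact Prod.ext (hx r hr) (hy r hr)
  · rintro ⟨y, hy, rfl⟩
    refine ⟨len_mk _ _, ?_, ?_, ?_, ?_⟩
    · intro r hr; rw [pt_mk n y hr]
    · rw [pt_mk n y (by omega), hy.y0]; push_cast; rfl
    · rw [pt_mk n y (by omega), hy.y1]; push_cast; rfl
    · intro r hr
      rw [pt_mk n y (by omega), pt_mk n y (by omega)]
      rcases hy.st r hr with h | h
      · left; simp only [h]; push_cast; ring
      · right; simp only [h]; push_cast; ring

theorem AI.par {n i : ℕ} {k : ℤ} {y : ℕ → ℤ} (h : AI n i k y) (hx : (i, k) ∈ XA n) {r : ℕ}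
    (hr : r ≤ n + 1) : ((r : ℤ) - y r) % 2 = 1 := by
  induction r with
  | zero =>
    have h1 := hx.2.2
    have h0 := h.y0
    simp only [] at h1
    push_cast
    omega
  | succ r ih =>
    have := ih (by omega)
    have := h.st r (by omega)
    push_cast
    omega

def cls (a : ℝ × ℝ) (x : ℕ × ℤ) : Prop := ((x.1 : ℤ) - x.2) % 2 = 0 ∧ a.1 = (x.1 : ℝ)

open Classical in
noncomputable def L (n : ℕ) : ((ℕ × ℤ) → ℤ) →+ ((ℕ × ℤ) → ℤ) :=
  AddMonoidHom.mk' (fun v x => if x ∈ XA n then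
    v (x.1, x.2 - 1) + v (x.1, x.2 + 1) - v (x.1 - 1, x.2) - v (x.1 + 1, x.2) else 0) (by
    intro a b
    funext x
    simp only [Pi.add_apply]
    split_ifs <;> ring)

theorem L_pos {n : ℕ} {x : ℕ × ℤ} (h : x ∈ XA n) (v : (ℕ × ℤ) → ℤ) : L n v x =
    v (x.1, x.2 - 1) + v (x.1, x.2 + 1) - v (x.1 - 1, x.2) - v (x.1 + 1, x.2) := by
  unfold L
  simp only [AddMonoidHom.mk'_apply]
  rw [if_pos h]

theorem L_neg {n : ℕ} {x : ℕ × ℤ} (h : x ∉ XA n) (v : (ℕ × ℤ) → ℤ) : L n v x = 0 := by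
  unfold L
  simp only [AddMonoidHom.mk'_apply]
  rw [if_neg h]

theorem fs_mk (n : ℕ) (y : ℕ → ℤ) (j : ℕ) (l : ℤ) :
    fs cls (mk n y) (j, l) = ind (j ≤ n + 1 ∧ ((j : ℤ) - l) % 2 = 0 ∧ y j < l) := by
  unfold mk
  rw [fs_map cls _ _ _ j]
  · apply ind_congr
    simp only [cls, Int.cast_lt]
    constructor
    · rintro ⟨h1, ⟨h2, -⟩, h3⟩; exact ⟨by omega, h2, h3⟩
    · rintro ⟨h1, h2, h3⟩; exact ⟨by omega, ⟨h2, trivial⟩, h3⟩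
  · rintro r _ hr ⟨_, h⟩
    simp only [] at h
    exact hr (by exact_mod_cast h)

theorem cp_iff (n : ℕ) (y : ℕ → ℤ) (j : ℕ) (l : ℤ) (b : Bool) :
    (j, l) ∈ Cp (.A n) (mk n y) b ↔ 1 ≤ j ∧ j ≤ n ∧ y j = l ∧ y (j - 1) = l + (if b then 1 else -1) ∧
      y (j + 1) = l + (if b then 1 else -1) := by
  show (1 ≤ j ∧ j ≤ n ∧ _ ∧ _ ∧ _) ↔ _
  constructor
  · rintro ⟨h1, h2, h3, h4, h5⟩
    rw [pt_mk n y (by simp only []; omega)] at h3 h4 h5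
    simp only [Prod.mk.injEq, true_and] at h3 h4 h5
    refine ⟨h1, h2, by exact_mod_cast h3, ?_, ?_⟩
    · cases b <;> simp at h4 ⊢ <;> exact_mod_cast h4
    · cases b <;> simp at h5 ⊢ <;> exact_mod_cast h5
  · rintro ⟨h1, h2, h3, h4, h5⟩
    refine ⟨h1, h2, ?_, ?_, ?_⟩
    · rw [pt_mk n y (by simp only []; omega), h3]
    · rw [pt_mk n y (by simp only []; omega)]
      simp only [h4]
      cases b <;> simp
    · rw [pt_mk n y (by simp only []; omega)]
      simp only [h5]
      cases b <;> simp

theorem mon_eq {n i : ℕ} {k : ℤ} (hx : (i, k) ∈ XA n) {y : ℕ → ℤ} (hy : AI n i k y) :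
    mon (.A n) (mk n y) = L n (fs cls (mk n y)) := by
  funext ⟨j, l⟩
  show ind _ - ind _ = _
  rw [ind_congr (cp_iff n y j l true), ind_congr (cp_iff n y j l false)]
  by_cases hj : (j, l) ∈ XA n
  · rw [L_pos hj]
    simp only [fs_mk]
    obtain ⟨h1, h2, h3⟩ := hj
    simp only [] at h1 h2 h3
    have p0 := hy.par hx (r := j) (by omega)
    have s1 := hy.st j h2
    have s0 := hy.st (j - 1) (by omega)
    rw [Nat.sub_add_cancel h1] at s0
    unfold ind
    simp only [if_true, Bool.false_eq_true, if_false]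
    rw [Nat.cast_sub h1]
    push_cast
    split_ifs <;> omega
  · rw [L_neg hj, ind_false, ind_false]
    · rfl
    · rintro ⟨h1, h2, h3, _⟩
      exact hj ⟨h1, h2, by have := hy.par hx (r := j) (by omega); simp only []; omega⟩
    · rintro ⟨h1, h2, h3, _⟩
      exact hj ⟨h1, h2, by have := hy.par hx (r := j) (by omega); simp only []; omega⟩

theorem mem_W {n j : ℕ} {l : ℤ} : (j, l) ∈ W (.A n) ↔ 1 ≤ j ∧ j ≤ n ∧ ((j : ℤ) - l) % 2 = 0 := by
  show (1 ≤ j ∧ j ≤ n ∧ ((j : ℤ) - (l - ((1 : ℕ) : ℤ))) % 2 = 1) ↔ _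
  omega

theorem Ldelta {n j : ℕ} {l : ℤ} (h : (j, l) ∈ W (.A n)) : Amon (.A n) j l = L n (Y (j, l)) := by
  rw [mem_W] at h
  obtain ⟨h1, h2, h3⟩ := h
  funext ⟨a, b⟩
  show (Y (j, l + 1) + Y (j, l - 1) - (if j = 1 then 0 else Y (j - 1, l))
        - (if j = n then 0 else Y (j + 1, l))) (a, b) = _
  have e1 : (if j = 1 then 0 else Y (j - 1, l)) (a, b) = if j = 1 then 0 else Y (j-1, l) (a, b) := by
    split_ifs <;> rfl
  have e2 : (if j = n then 0 else Y (j + 1, l)) (a, b) = if j = n then 0 else Y (j+1, l) (a, b) := by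
    split_ifs <;> rfl
  simp only [Pi.add_apply, Pi.sub_apply, e1, e2]
  by_cases hX : (a, b) ∈ XA n
  · rw [L_pos hX]
    obtain ⟨g1, g2, g3⟩ := hX
    simp only [] at g1 g2 g3
    simp only [Y, Prod.mk.injEq]
    clear e1 e2
    rcases Nat.lt_trichotomy a j with h | h | h
    · grind
    · grind
    · grind
  · rw [L_neg hX]
    have g : ¬ (1 ≤ a ∧ a ≤ n ∧ ((a : ℤ) - b) % 2 = 1) := hX
    simp only [Y, Prod.mk.injEq]
    clear hX e1 e2
    grind

theorem Linj {n : ℕ} (v : (ℕ × ℤ) → ℤ) (hW : ∀ x, x ∉ W (.A n) → v x = 0)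
    (hB : ∃ B : ℤ, ∀ x : ℕ × ℤ, x.2 < B → v x = 0) (hL : L n v = 0) : v = 0 := by
  obtain ⟨B, hB⟩ := hB
  have key : ∀ m : ℕ, ∀ x : ℕ × ℤ, x.2 < B + m → v x = 0 := by
    intro m
    induction m with
    | zero => intro x hx; exact hB x (by simpa using hx)
    | succ m ih =>
      rintro ⟨j, l⟩ hx
      simp only [] at hx
      push_cast at hx
      by_cases hw : (j, l) ∈ W (.A n)
      · obtain ⟨h1, h2, h3⟩ := mem_W.1 hw
        have := congrFun hL (j, l - 1)
        have hX : (j, l - 1) ∈ XA n := ⟨h1, h2, by simp only []; omega⟩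
        rw [L_pos hX] at this
        simp only [sub_add_cancel, Pi.zero_apply] at this
        rw [ih (j, l - 1 - 1) (by simp only []; omega), ih (j - 1, l - 1) (by simp only []; omega),
          ih (j + 1, l - 1) (by simp only []; omega)] at this
        omega
      · exact hW _ hw
  funext x
  exact key (x.2 - B + 1).toNat x (by omega)

theorem wa_iff {n : ℕ} {y z : ℕ → ℤ} : WeaklyAbove (mk n y) (mk n z) ↔ ∀ r, r < n + 2 → y r ≤ z r := by
  unfold WeaklyAbove
  rw [len_mk, len_mk]
  constructor
  · rintro ⟨_, h⟩ r hr
    have := h r hr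
    rw [pt_mk n _ hr, pt_mk n _ hr] at this
    simp only [] at this
    exact_mod_cast this
  · intro h
    refine ⟨rfl, fun r hr => ?_⟩
    rw [pt_mk n _ hr, pt_mk n _ hr]
    simp only []
    exact_mod_cast h r hr

theorem exl {n i : ℕ} {k : ℤ} (hx : (i, k) ∈ XA n) {y z : ℕ → ℤ} (hy : AI n i k y)
    (hz : AI n i k z) (hle : ∀ r, r < n + 2 → y r ≤ z r) (hne : mk n y ≠ mk n z) :
    ∃ x ∈ W (.A n), ∃ p', LoweredTo (.A n) i k x.1 x.2 (mk n y) p' ∧ WeaklyAbove p' (mk n z) := by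
  have hn : ((Finset.range (n + 2)).filter fun r => y r < z r).Nonempty := by
    by_contra hc
    rw [Finset.not_nonempty_iff_eq_empty] at hc
    apply hne
    unfold mk
    apply List.map_congr_left
    intro r hr
    rw [List.mem_range] at hr
    have h1 : r ∉ (Finset.range (n + 2)).filter fun r => y r < z r := by rw [hc]; simp
    simp only [Finset.mem_filter, Finset.mem_range, not_and, not_lt] at h1
    rw [le_antisymm (hle r hr) (h1 hr)]
  obtain ⟨r, hr, hmin⟩ := Finset.exists_min_image _ y hn
  simp only [Finset.mem_filter, Finset.mem_range] at hr hmin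
  obtain ⟨hr1, hr2⟩ := hr
  have h0 : r ≠ 0 := by rintro rfl; have := hy.y0; have := hz.y0; omega
  have h1 : r ≠ n + 1 := by rintro rfl; have := hy.y1; have := hz.y1; omega
  have py := hy.par hx (r := r) (by omega)
  have pz := hz.par hx (r := r) (by omega)
  have sy1 := hy.st r (by omega)
  have sz1 := hz.st r (by omega)
  have sy0 := hy.st (r - 1) (by omega)
  have sz0 := hz.st (r - 1) (by omega)
  rw [Nat.sub_add_cancel (by omega)] at sy0 sz0
  have m1 : y (r + 1) = y r + 1 := by
    by_contra hc
    have := hmin (r + 1) ⟨by omega, by omega⟩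
    omega
  have m0 : y (r - 1) = y r + 1 := by
    by_contra hc
    have := hmin (r - 1) ⟨by omega, by omega⟩
    omega
  have hw : (r, y r + 1) ∈ W (.A n) := mem_W.2 ⟨by omega, by omega, by omega⟩
  have hny : AI n i k (Function.update y r (y r + 2)) := by
    refine ⟨?_, ?_, ?_⟩
    · rw [Function.update_of_ne h0.symm]; exact hy.y0
    · rw [Function.update_of_ne h1.symm]; exact hy.y1
    · intro s hs
      have := hy.st s hs
      by_cases e1 : s = r
      · subst e1
        rw [Function.update_self, Function.update_of_ne (by omega)]
        omega
      · by_cases e2 : s + 1 = r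
        · subst e2
          rw [Function.update_self, Function.update_of_ne (by omega)]
          simp only [Nat.add_sub_cancel] at m0
          omega
        · rw [Function.update_of_ne e1, Function.update_of_ne e2]; exact this
  refine ⟨(r, y r + 1), hw, mk n (Function.update y r (y r + 2)), ⟨mem_iff.2 ⟨_, hy, rfl⟩,
    mem_iff.2 ⟨_, hny, rfl⟩, ⟨?_, ?_⟩, ?_⟩, ?_⟩
  · show (r, y r + 1 - ((1 : ℕ) : ℤ)) ∈ _
    rw [cp_iff]
    simp only [if_true]
    refine ⟨by omega, by omega, by omega, by omega, by omega⟩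
  · show (r, y r + 1 + ((1 : ℕ) : ℤ)) ∉ _
    rw [cp_iff]
    rintro ⟨_, _, h, _⟩
    omega
  · refine ⟨r, by rw [len_mk]; omega, ?_, by rw [len_mk, len_mk], ?_, ?_⟩
    · rw [pt_mk n _ (by omega)]; push_cast; simp
    · rw [pt_mk n _ (by omega), Function.update_self]; push_cast
      rw [add_assoc]; norm_num
    · intro s hs hsr
      rw [len_mk] at hs
      rw [pt_mk n _ hs, pt_mk n _ hs, Function.update_of_ne hsr]
  · rw [wa_iff]
    intro s hs
    by_cases e : s = r
    · subst e; rw [Function.update_self]; omega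
    · rw [Function.update_of_ne e]; exact hle s hs

noncomputable def model (n : ℕ) : Model (.A n) where
  cls := cls
  L := L n
  cls_col := by rintro a b x ⟨_, h1⟩ ⟨_, h2⟩; rw [h1, h2]
  Ldelta := by rintro ⟨j, l⟩ h; exact Ldelta h
  Linj := Linj
  mon_eq := by
    rintro ⟨i, k⟩ hx p hp
    obtain ⟨y, hy, rfl⟩ := mem_iff.1 hp
    exact mon_eq hx hy
  low := by
    rintro ⟨i, k⟩ hx ⟨j, l⟩ hw p q ⟨_, _, _, h⟩
    obtain ⟨h1, h2, h3⟩ := mem_W.1 hw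
    simp only [] at h
    funext ⟨a, b⟩
    unfold fs
    rw [sum_replace1 h]
    rw [Pi.sub_apply, sub_add]
    congr 1
    unfold wt cls
    simp only [Y, Prod.mk.injEq, Nat.cast_inj]
    have e1 : (l : ℝ) - 1 < b ↔ l - 1 < b := by
      rw [← Int.cast_lt (R := ℝ)]; push_cast; rfl
    have e2 : (l : ℝ) + 1 < b ↔ l + 1 < b := by
      rw [← Int.cast_lt (R := ℝ)]; push_cast; rfl
    rw [e1, e2]
    unfold ind
    split_ifs <;> omega
  len := by
    rintro ⟨i, k⟩ hx p hp q hq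
    rw [hp.1, hq.1]
  xco := by
    rintro ⟨i, k⟩ hx p hp q hq r hr
    rw [hp.1] at hr
    rw [hp.2.1 r hr, hq.2.1 r hr]
  clse := by
    rintro ⟨i, k⟩ hx p hp q hq r hr ⟨j, l⟩ ⟨h1, h2⟩
    rw [hp.1] at hr
    refine ⟨⟨h1, ?_⟩, ?_⟩
    · rw [← h2, hp.2.1 r hr, hq.2.1 r hr]
    · rw [hp.2.1 r hr] at h2
      have h3 : r = j := by exact_mod_cast h2
      subst h3
      rw [mem_W]
      by_cases h0 : r = 0
      · right; subst h0
        exact Prod.ext (by rw [hp.2.1 0 hr, hq.2.1 0 hr]) (by rw [hp.2.2.1, hq.2.2.1])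
      · by_cases h0 : r = n + 1
        · right; subst h0
          exact Prod.ext (by rw [hp.2.1 _ hr, hq.2.1 _ hr]) (by rw [hp.2.2.2.1, hq.2.2.2.1])
        · left; exact ⟨by omega, by omega, h1⟩
  ex := by
    rintro ⟨i, k⟩ hx p hp q hq hle hne
    obtain ⟨y, hy, rfl⟩ := mem_iff.1 hp
    obtain ⟨z, hz, rfl⟩ := mem_iff.1 hq
    exact exl hx hy hz (wa_iff.1 hle) hne
  mono := by
    rintro ⟨i, k⟩ hx p hp q hq hle
    obtain ⟨y, hy, rfl⟩ := mem_iff.1 hp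
    obtain ⟨z, hz, rfl⟩ := mem_iff.1 hq
    rw [wa_iff]
    intro r hr
    have pz := hz.par hx (r := r) (by omega)
    have h := hle (r, z r + 1)
    rw [fs_mk, fs_mk, ind_true (⟨by omega, by omega, by omega⟩)] at h
    have := ind_pos (lt_of_lt_of_le one_pos h)
    omega

end TA

namespace TB

theorem key_lt {ε : ℝ} (h0 : 0 < ε) (h1 : ε < 1 / 2) {e s e' s' : ℤ} (hs : s = 1 ∨ s = -1)
    (hs' : s' = 1 ∨ s' = -1) : (e : ℝ) + ε * s < e' + ε * s' ↔ 4 * e + s < 4 * e' + s' := by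
  rcases lt_trichotomy e e' with h | h | h
  · have h2 : (e : ℝ) + 1 ≤ e' := by exact_mod_cast h
    refine ⟨fun _ => by omega, fun _ => ?_⟩
    rcases hs with rfl | rfl <;> rcases hs' with rfl | rfl <;> push_cast <;> linarith
  · subst h
    rcases hs with rfl | rfl <;> rcases hs' with rfl | rfl <;> push_cast <;>
      constructor <;> intro h <;> first | omega | linarith
  · have h2 : (e' : ℝ) + 1 ≤ e := by exact_mod_cast h
    refine ⟨fun hh => ?_, fun hh => by omega⟩
    exfalso
    rcases hs with rfl | rfl <;> rcases hs' with rfl | rfl <;> push_cast at hh <;> linarith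

theorem key_inj {ε : ℝ} (h0 : 0 < ε) (h1 : ε < 1 / 2) {e s e' s' : ℤ} (hs : s = 1 ∨ s = -1)
    (hs' : s' = 1 ∨ s' = -1) (h : (e : ℝ) + ε * s = e' + ε * s') : e = e' ∧ s = s' := by
  have a := (key_lt h0 h1 hs hs').not.1 h.not_lt
  have b := (key_lt h0 h1 hs' hs).not.1 h.symm.not_lt
  omega

theorem key_int {ε : ℝ} (h0 : 0 < ε) (h1 : ε < 1 / 2) {e s b : ℤ} (hs : s = 1 ∨ s = -1)
    (hne : e ≠ b) : (e : ℝ) + ε * s < b ↔ e < b := by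
  rcases lt_or_gt_of_ne hne with h | h
  · have h2 : (e : ℝ) + 1 ≤ b := by exact_mod_cast h
    refine ⟨fun _ => h, fun _ => ?_⟩
    rcases hs with rfl | rfl <;> push_cast <;> linarith
  · have h2 : (b : ℝ) + 1 ≤ e := by exact_mod_cast h
    refine ⟨fun hh => ?_, fun hh => by omega⟩
    exfalso
    rcases hs with rfl | rfl <;> push_cast at hh <;> linarith

noncomputable def col (n : ℕ) (l : ℤ) (r : ℕ) : ℝ :=
  if l % 4 = 3 then 2 * (r : ℝ) else 4 * (n : ℝ) - 2 - 2 * (r : ℝ)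

noncomputable def hpt (n : ℕ) (ε : ℝ) (l : ℤ) (y : ℕ → ℤ) (r : ℕ) : ℝ × ℝ :=
  if r < n then (col n l r, (y r : ℝ))
  else (2 * (n : ℝ) - 1, (y n : ℝ) + ε * ((y n - y (n - 1) : ℤ) : ℝ))

theorem hpt_lt {n : ℕ} {ε : ℝ} {l : ℤ} {y : ℕ → ℤ} {r : ℕ} (h : r < n) :
    hpt n ε l y r = (col n l r, (y r : ℝ)) := by unfold hpt; rw [if_pos h]

theorem hpt_n {n : ℕ} {ε : ℝ} {l : ℤ} {y : ℕ → ℤ} :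
    hpt n ε l y n = (2 * (n : ℝ) - 1, (y n : ℝ) + ε * ((y n - y (n - 1) : ℤ) : ℝ)) := by
  unfold hpt; rw [if_neg (lt_irrefl _)]

noncomputable def mkH (n : ℕ) (ε : ℝ) (l : ℤ) (y : ℕ → ℤ) : List (ℝ × ℝ) :=
  (List.range (n + 1)).map (hpt n ε l y)

theorem len_mkH (n ε l y) : (mkH n ε l y).length = n + 1 := by simp [mkH]

theorem pt_mkH {n : ℕ} {ε : ℝ} {l : ℤ} {y : ℕ → ℤ} {r : ℕ} (h : r ≤ n) :
    pt (mkH n ε l y) r = hpt n ε l y r := pt_map_range _ _ (by omega)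

structure HI (n : ℕ) (l : ℤ) (y : ℕ → ℤ) : Prop where
  y0 : y 0 = l + 2 * n - 1
  st : ∀ r, r + 2 ≤ n → y (r + 1) = y r + 2 ∨ y (r + 1) = y r - 2
  la : y n - y (n - 1) = 1 ∨ y n - y (n - 1) = -1

theorem mem_spin {n : ℕ} (hn : 2 ≤ n) {ε : ℝ} {l : ℤ} {p : List (ℝ × ℝ)} :
    p ∈ pathsBspin n ε l ↔ ∃ y, HI n l y ∧ p = mkH n ε l y := by
  constructor
  · rintro ⟨hl, hx, hxn, h0, hst, hla⟩
    have hz : ∀ r, r < n → ∃ z : ℤ, (pt p r).2 = z := by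
      intro r
      induction r with
      | zero => intro _; exact ⟨l + 2 * n - 1, by rw [h0]; push_cast; rfl⟩
      | succ r ih =>
        intro hr
        obtain ⟨z, hz⟩ := ih (by omega)
        rcases hst r (by omega) with h | h
        · exact ⟨z + 2, by push_cast; linarith⟩
        · exact ⟨z - 2, by push_cast; linarith⟩
    obtain ⟨s, hs1, hs⟩ : ∃ s : ℤ, (s = 1 ∨ s = -1) ∧
        (pt p n).2 - (pt p (n - 1)).2 = s + ε * s := by
      rcases hla with h | h
      · exact ⟨1, Or.inl rfl, by rw [h]; push_cast; ring⟩
      · exact ⟨-1, Or.inr rfl, by rw [h]; push_cast; ring⟩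
    have hz' : ∀ r, ∃ z : ℤ, (r < n → (pt p r).2 = z) ∧ (r = n → (pt p (n - 1)).2 = z - s) :=
      fun r => by
      by_cases h : r < n
      · obtain ⟨z, hz⟩ := hz r h; exact ⟨z, fun _ => hz, fun h' => absurd h' h.ne⟩
      · obtain ⟨z, hz⟩ := hz (n - 1) (by omega)
        exact ⟨z + s, fun h' => absurd h' h, fun _ => by rw [hz]; push_cast; ring⟩
    choose y hy using hz'
    have hyn : y n - y (n - 1) = s := by
      have h1 := (hy n).2 rfl
      rw [(hy (n - 1)).1 (by omega)] at h1
      have : ((y n - y (n - 1) : ℤ) : ℝ) = s := by push_cast; linarith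
      exact_mod_cast this
    refine ⟨y, ⟨?_, ?_, by rw [hyn]; exact hs1⟩, ?_⟩
    · rw [(hy 0).1 (by omega)] at h0; exact_mod_cast h0
    · intro r hr
      have := hst r hr
      rw [(hy r).1 (by omega), (hy (r+1)).1 (by omega)] at this
      rcases this with h | h
      · left
        have : ((y (r+1) : ℤ) : ℝ) = ((y r + 2 : ℤ) : ℝ) := by push_cast; linarith
        exact_mod_cast this
      · right
        have : ((y (r+1) : ℤ) : ℝ) = ((y r - 2 : ℤ) : ℝ) := by push_cast; linarith
        exact_mod_cast this
    · apply list_ext_pt (by rw [hl, len_mkH])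
      intro r hr
      rw [hl] at hr
      rw [pt_mkH (by omega)]
      by_cases hrn : r < n
      · rw [hpt_lt hrn]
        refine Prod.ext ?_ ((hy r).1 hrn)
        unfold col
        split_ifs at hx ⊢ with h
        · exact hx r hrn
        · exact hx r hrn
      · have : r = n := by omega
        subst this
        rw [hpt_n]
        refine Prod.ext hxn ?_
        simp only []
        rw [hyn]
        have := (hy r).2 rfl
        linarith
  · rintro ⟨y, hy, rfl⟩
    refine ⟨len_mkH _ _ _ _, ?_, ?_, ?_, ?_, ?_⟩
    · split_ifs with h <;> intro r hr <;> rw [pt_mkH hr.le, hpt_lt hr] <;> simp [col, h]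
    · rw [pt_mkH le_rfl, hpt_n]
    · rw [pt_mkH (by omega), hpt_lt (by omega), hy.y0]; push_cast; rfl
    · intro r hr
      rw [pt_mkH (by omega), pt_mkH (by omega), hpt_lt (by omega), hpt_lt (by omega)]
      rcases hy.st r hr with h | h
      · left; simp only [h]; push_cast; ring
      · right; simp only [h]; push_cast; ring
    · rw [pt_mkH le_rfl, pt_mkH (by omega), hpt_n, hpt_lt (by omega)]
      rcases hy.la with h | h
      · left
        have : y n = y (n - 1) + 1 := by omega
        simp only [h]; rw [this]; push_cast; ring
      · right
        have : y n = y (n - 1) - 1 := by omega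
        simp only [h]; rw [this]; push_cast; ring

theorem HI.par {n : ℕ} {l : ℤ} {y : ℕ → ℤ} (h : HI n l y) {r : ℕ} (hr : r < n) :
    (y r - (l + 2 * n - 1 + 2 * r)) % 4 = 0 := by
  induction r with
  | zero => have := h.y0; push_cast; omega
  | succ r ih =>
    have := ih (by omega)
    have := h.st r (by omega)
    push_cast
    omega

theorem HI.parn {n : ℕ} (hn : 2 ≤ n) {l : ℤ} {y : ℕ → ℤ} (h : HI n l y) :
    (y (n - 1) - (l + 1)) % 4 = 0 := by
  have := h.par (r := n - 1) (by omega)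
  push_cast [Nat.cast_sub (show 1 ≤ n by omega)] at this
  omega

def cls (n : ℕ) (ε : ℝ) (a : ℝ × ℝ) (x : ℕ × ℤ) : Prop :=
  (x.1 < n ∧ (((2 * (n : ℤ) + x.2 - 2 * (x.1 : ℤ)) % 4 = 0 ∧ a.1 = 2 * (x.1 : ℝ)) ∨
    ((2 * (n : ℤ) + x.2 - 2 * (x.1 : ℤ)) % 4 = 2 ∧ a.1 = 4 * (n : ℝ) - 2 - 2 * (x.1 : ℝ)))) ∨
  (x.1 = n ∧ x.2 % 2 = 0 ∧ a.1 = 2 * (n : ℝ) - 1 ∧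
    ∃ e s : ℤ, (s = 1 ∨ s = -1) ∧ a.2 = e + ε * s ∧ (e - s - x.2) % 4 = 0)

theorem cls_col {n : ℕ} {ε : ℝ} (a b : ℝ × ℝ) (x : ℕ × ℤ) (h1 : cls n ε a x) (h2 : cls n ε b x) :
    a.1 = b.1 := by
  rcases h1 with ⟨h, ⟨h1, h1'⟩ | ⟨h1, h1'⟩⟩ | ⟨h, _, h1', _⟩ <;>
  rcases h2 with ⟨g, ⟨h2, h2'⟩ | ⟨h2, h2'⟩⟩ | ⟨g, _, h2', _⟩ <;>
  first
  | omega
  | rw [h1', h2']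

theorem cls_mid {n : ℕ} {ε : ℝ} (h0 : 0 < ε) (h1 : ε < 1 / 2) {e s : ℤ} (hs : s = 1 ∨ s = -1)
    (j : ℕ) (l : ℤ) :
    cls n ε (2 * (n : ℝ) - 1, (e : ℝ) + ε * s) (j, l) ↔ j = n ∧ l % 2 = 0 ∧ (e - s - l) % 4 = 0 := by
  constructor
  · rintro (⟨h, ⟨_, h2⟩ | ⟨_, h2⟩⟩ | ⟨h, h2, _, e', s', hs', he, h4⟩)
    · exfalso
      simp only [] at h2
      have : 2 * (n : ℤ) - 1 = 2 * (j : ℤ) := by exact_mod_cast h2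
      omega
    · exfalso
      simp only [] at h2
      have : 2 * (n : ℤ) - 1 = 4 * n - 2 - 2 * (j : ℤ) := by exact_mod_cast h2
      omega
    · obtain ⟨rfl, rfl⟩ := key_inj h0 h1 hs hs' he
      exact ⟨h, h2, h4⟩
  · rintro ⟨h, h2, h3⟩
    exact Or.inr ⟨h, h2, rfl, e, s, hs, rfl, h3⟩

theorem cls_left {n : ℕ} {ε : ℝ} {r : ℕ} (hr : r < n) (z : ℝ) (j : ℕ) (l : ℤ) :
    cls n ε (2 * (r : ℝ), z) (j, l) ↔ r = j ∧ (2 * (n : ℤ) + l - 2 * (r : ℤ)) % 4 = 0 := by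
  constructor
  · rintro (⟨h, ⟨h1, h2⟩ | ⟨_, h2⟩⟩ | ⟨h, _, h2, _⟩)
    · simp only [] at h1 h2
      have : 2 * (r : ℤ) = 2 * (j : ℤ) := by exact_mod_cast h2
      have : r = j := by omega
      subst this
      exact ⟨rfl, h1⟩
    · exfalso
      simp only [] at h2 h
      have : 2 * (r : ℤ) = 4 * n - 2 - 2 * (j : ℤ) := by exact_mod_cast h2
      omega
    · exfalso
      simp only [] at h2
      have : 2 * (r : ℤ) = 2 * (n : ℤ) - 1 := by exact_mod_cast h2
      omega
  · rintro ⟨rfl, h⟩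
    exact Or.inl ⟨hr, Or.inl ⟨h, rfl⟩⟩

theorem cls_right {n : ℕ} {ε : ℝ} {r : ℕ} (hr : r < n) (z : ℝ) (j : ℕ) (l : ℤ) :
    cls n ε (4 * (n : ℝ) - 2 - 2 * (r : ℝ), z) (j, l) ↔
      r = j ∧ (2 * (n : ℤ) + l - 2 * (r : ℤ)) % 4 = 2 := by
  constructor
  · rintro (⟨h, ⟨h1, h2⟩ | ⟨h1, h2⟩⟩ | ⟨h, _, h2, _⟩)
    · exfalso
      simp only [] at h2 h
      have : 4 * n - 2 - 2 * (r : ℤ) = 2 * (j : ℤ) := by exact_mod_cast h2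
      omega
    · simp only [] at h1 h2
      have : 4 * n - 2 - 2 * (r : ℤ) = 4 * n - 2 - 2 * (j : ℤ) := by exact_mod_cast h2
      have : r = j := by omega
      subst this
      exact ⟨rfl, h1⟩
    · exfalso
      simp only [] at h2
      have : 4 * n - 2 - 2 * (r : ℤ) = 2 * (n : ℤ) - 1 := by exact_mod_cast h2
      omega
  · rintro ⟨rfl, h⟩
    exact Or.inl ⟨hr, Or.inr ⟨h, rfl⟩⟩

section
variable {n : ℕ} (hn : 2 ≤ n) {ε : ℝ} (h0 : 0 < ε) (h1 : ε < 1 / 2)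
include hn h0 h1

theorem cls_hpt {l : ℤ} (hl : l % 2 = 1) {y : ℕ → ℤ} (hy : HI n l y) {r : ℕ} (hr : r ≤ n)
    (j : ℕ) (m : ℤ) : cls n ε (hpt n ε l y r) (j, m) ↔ r = j ∧ (m - (l + 1 + 2 * (n + j))) % 4 = 0 := by
  by_cases h : r < n
  · rw [hpt_lt h]
    unfold col
    split_ifs with h4
    · rw [cls_left h]
      constructor
      · rintro ⟨rfl, hh⟩; exact ⟨rfl, by omega⟩
      · rintro ⟨rfl, hh⟩; exact ⟨rfl, by omega⟩
    · rw [cls_right h]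
      constructor
      · rintro ⟨rfl, hh⟩; exact ⟨rfl, by omega⟩
      · rintro ⟨rfl, hh⟩; exact ⟨rfl, by omega⟩
  · have : r = n := by omega
    subst this
    have := hy.parn hn
    rw [hpt_n, cls_mid h0 h1 hy.la]
    constructor
    · rintro ⟨rfl, hh⟩; exact ⟨rfl, by omega⟩
    · rintro ⟨rfl, hh⟩; exact ⟨rfl, by omega, by omega⟩

theorem fs_mkH {l : ℤ} (hl : l % 2 = 1) {y : ℕ → ℤ} (hy : HI n l y) (j : ℕ) (m : ℤ) :
    fs (cls n ε) (mkH n ε l y) (j, m) =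
      ind (j ≤ n ∧ (m - (l + 1 + 2 * (n + j))) % 4 = 0 ∧ y j < m) := by
  unfold mkH
  rw [fs_map _ _ _ _ j]
  · apply ind_congr
    have e : j ≤ n → (m - (l + 1 + 2 * (n + j))) % 4 = 0 →
        ((hpt n ε l y j).2 < (m : ℝ) ↔ y j < m) := by
      intro hj hm
      by_cases h : j < n
      · rw [hpt_lt h]; exact Int.cast_lt
      · have : j = n := by omega
        subst this
        rw [hpt_n]
        have := hy.parn hn
        have hla := hy.la
        exact key_int h0 h1 hla (by omega)
    constructor
    · rintro ⟨g1, g2, g3⟩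
      have g2' := ((cls_hpt hn h0 h1 hl hy (by omega) j m).1 g2).2
      exact ⟨by omega, g2', (e (by omega) g2').1 g3⟩
    · rintro ⟨g1, g2, g3⟩
      exact ⟨by omega, (cls_hpt hn h0 h1 hl hy (by omega) j m).2 ⟨rfl, g2⟩, (e (by omega) g2).2 g3⟩
  · intro r hr hne hc
    exact hne ((cls_hpt hn h0 h1 hl hy (by omega) j m).1 hc).1

end

def L (n : ℕ) : ((ℕ × ℤ) → ℤ) →+ ((ℕ × ℤ) → ℤ) :=
  AddMonoidHom.mk' (fun v x =>
    if x.1 = n ∧ x.2 % 2 = 1 then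
      v (n, x.2 - 1) + v (n, x.2 + 1) - v (n - 1, x.2 + 1) - v (n - 1, x.2 - 1)
    else if 1 ≤ x.1 ∧ x.1 < n ∧ x.2 % 2 = 0 then
      v (x.1, x.2 - 2) + v (x.1, x.2 + 2) - v (x.1 - 1, x.2) - v (x.1 + 1, x.2)
    else 0) (by
    intro a b
    funext x
    simp only [Pi.add_apply]
    split_ifs <;> ring)

theorem L_n {n : ℕ} {m : ℤ} (h : m % 2 = 1) (v : (ℕ × ℤ) → ℤ) : L n v (n, m) =
    v (n, m - 1) + v (n, m + 1) - v (n - 1, m + 1) - v (n - 1, m - 1) := by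
  unfold L
  simp only [AddMonoidHom.mk'_apply]
  rw [if_pos ⟨trivial, h⟩]

theorem L_lt {n j : ℕ} {m : ℤ} (hj : 1 ≤ j) (hj' : j < n) (h : m % 2 = 0) (v : (ℕ × ℤ) → ℤ) :
    L n v (j, m) = v (j, m - 2) + v (j, m + 2) - v (j - 1, m) - v (j + 1, m) := by
  unfold L
  simp only [AddMonoidHom.mk'_apply]
  rw [if_neg (by omega), if_pos ⟨hj, hj', h⟩]

theorem L_neg {n j : ℕ} {m : ℤ} (h : (j, m) ∉ XB n) (v : (ℕ × ℤ) → ℤ) : L n v (j, m) = 0 := by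
  unfold L
  simp only [AddMonoidHom.mk'_apply]
  have h' : ¬ ((j = n ∧ m % 2 = 1) ∨ (1 ≤ j ∧ j < n ∧ m % 2 = 0)) := h
  rw [if_neg (by tauto), if_neg (by tauto)]

theorem mem_W {n : ℕ} (hn : 2 ≤ n) {ε : ℝ} {j : ℕ} {l : ℤ} :
    (j, l) ∈ W (.B n ε) ↔ 1 ≤ j ∧ j ≤ n ∧ l % 2 = 0 := by
  show ((j = n ∧ (l - ((if j = n then 1 else 2 : ℕ) : ℤ)) % 2 = 1) ∨
    (1 ≤ j ∧ j < n ∧ (l - ((if j = n then 1 else 2 : ℕ) : ℤ)) % 2 = 0)) ↔ _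
  split_ifs <;> push_cast <;> omega

theorem Linj {n : ℕ} (hn : 2 ≤ n) {ε : ℝ} (v : (ℕ × ℤ) → ℤ) (hW : ∀ x, x ∉ W (.B n ε) → v x = 0)
    (hB : ∃ B : ℤ, ∀ x : ℕ × ℤ, x.2 < B → v x = 0) (hL : L n v = 0) : v = 0 := by
  obtain ⟨B, hB⟩ := hB
  have key : ∀ m : ℕ, ∀ x : ℕ × ℤ, x.2 < B + m → v x = 0 := by
    intro m
    induction m with
    | zero => intro x hx; exact hB x (by simpa using hx)
    | succ m ih =>
      have hlt : ∀ j : ℕ, j < n → ∀ l : ℤ, l < B + m + 1 → v (j, l) = 0 := by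
        intro j hj l hl
        by_cases hw : (j, l) ∈ W (.B n ε)
        · obtain ⟨h1, h2, h3⟩ := (mem_W hn).1 hw
          have := congrFun hL (j, l - 2)
          rw [L_lt h1 hj (by omega)] at this
          simp only [sub_add_cancel, Pi.zero_apply] at this
          rw [ih (j, l - 2 - 2) (by simp only []; omega), ih (j - 1, l - 2) (by simp only []; omega),
            ih (j + 1, l - 2) (by simp only []; omega)] at this
          omega
        · exact hW _ hw
      rintro ⟨j, l⟩ hx
      simp only [] at hx
      push_cast at hx
      by_cases hw : (j, l) ∈ W (.B n ε)
      · obtain ⟨h1, h2, h3⟩ := (mem_W hn).1 hw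
        by_cases hj : j < n
        · exact hlt j hj l (by omega)
        · have : j = n := by omega
          subst this
          have := congrFun hL (j, l - 1)
          rw [L_n (by omega)] at this
          simp only [sub_add_cancel, Pi.zero_apply] at this
          rw [ih (j, l - 1 - 1) (by simp only []; omega), hlt (j - 1) (by omega) l (by omega),
            ih (j - 1, l - 1 - 1) (by simp only []; omega)] at this
          omega
      · exact hW _ hw
  funext x
  exact key (x.2 - B + 1).toNat x (by omega)

theorem Ldelta {n : ℕ} (hn : 2 ≤ n) {ε : ℝ} {j : ℕ} {l : ℤ} (h : (j, l) ∈ W (.B n ε)) :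
    Amon (.B n ε) j l = L n (Y (j, l)) := by
  obtain ⟨h1, h2, h3⟩ := (mem_W hn).1 h
  clear h
  funext ⟨a, b⟩
  have e1 : ∀ c : ℕ × ℤ, (if j = 1 then 0 else Y c) (a, b) = if j = 1 then 0 else Y c (a, b) := by
    intro c; split_ifs <;> rfl
  unfold Amon
  simp only []
  by_cases hX : (a, b) ∈ XB n
  · rcases hX with ⟨g1, g2⟩ | ⟨g1, g2, g3⟩
    · simp only [] at g1 g2
      subst g1
      rw [L_n g2]
      split_ifs <;> simp only [Pi.add_apply, Pi.sub_apply, e1, Pi.zero_apply] <;>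
        simp only [Y, Prod.mk.injEq] <;> clear e1 <;> grind
    · simp only [] at g1 g2 g3
      rw [L_lt g1 g2 g3]
      split_ifs <;> simp only [Pi.add_apply, Pi.sub_apply, e1, Pi.zero_apply] <;>
        simp only [Y, Prod.mk.injEq] <;> clear e1 <;> grind (splits := 25)
  · rw [L_neg hX]
    have h' : ¬ ((a = n ∧ b % 2 = 1) ∨ (1 ≤ a ∧ a < n ∧ b % 2 = 0)) := hX
    clear hX
    split_ifs <;> simp only [Pi.add_apply, Pi.sub_apply, e1, Pi.zero_apply] <;>
        simp only [Y, Prod.mk.injEq] <;> clear e1 <;> grind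

end TB

namespace TB

def CH (n : ℕ) (y : ℕ → ℤ) (b : Bool) (j : ℕ) (m : ℤ) : Prop :=
  1 ≤ j ∧ j ≤ n ∧ y j = m ∧
    (if b then y j < y (j - 1) ∧ (j < n → y j < y (j + 1))
      else y (j - 1) < y j ∧ (j < n → y (j + 1) < y j))

theorem CH_true {n y j m} : CH n y true j m ↔ 1 ≤ j ∧ j ≤ n ∧ y j = m ∧
    y j < y (j - 1) ∧ (j < n → y j < y (j + 1)) := by simp [CH]

theorem CH_false {n y j m} : CH n y false j m ↔ 1 ≤ j ∧ j ≤ n ∧ y j = m ∧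
    y (j - 1) < y j ∧ (j < n → y (j + 1) < y j) := by simp [CH]

theorem ind_cases (s : Prop) : (s ∧ ind s = 1) ∨ (¬ s ∧ ind s = 0) := by
  by_cases h : s
  · exact Or.inl ⟨h, ind_true h⟩
  · exact Or.inr ⟨h, ind_false h⟩

theorem core {a b c m : ℤ} (hm : (m - c) % 4 = 0) (hb : b = c + 2 ∨ b = c - 2)
    (ha : a = c + 2 ∨ a = c - 2 ∨ a = c + 1 ∨ a = c - 1) :
    ind (c < m - 2) + ind (c < m + 2) - ind (b < m) - ind (a < m) =
      ind (c = m ∧ c < b ∧ c < a) - ind (c = m ∧ b < c ∧ a < c) := by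
  have i1 := ind_cases (c < m - 2)
  have i2 := ind_cases (c < m + 2)
  have i3 := ind_cases (b < m)
  have i4 := ind_cases (a < m)
  have i5 := ind_cases (c = m ∧ c < b ∧ c < a)
  have i6 := ind_cases (c = m ∧ b < c ∧ a < c)
  have ht : m ≤ c - 4 ∨ m = c ∨ c + 4 ≤ m := by omega
  clear hm
  rcases ht with ht | ht | ht <;> rcases hb with rfl | rfl <;>
    rcases ha with rfl | rfl | rfl | rfl <;> omega

theorem core2 {b c m : ℤ} (hm : (m + 1 - b) % 4 = 0) (hb : c = b + 1 ∨ c = b - 1) :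
    ind (c < m + 1) - ind (b < m - 1) =
      ind (c = m ∧ c < b) - ind (c = m ∧ b < c) := by
  have i1 := ind_cases (c < m + 1)
  have i2 := ind_cases (b < m - 1)
  have i5 := ind_cases (c = m ∧ c < b)
  have i6 := ind_cases (c = m ∧ b < c)
  have ht : m + 1 ≤ b - 4 ∨ m + 1 = b ∨ b + 4 ≤ m + 1 := by omega
  clear hm
  rcases ht with ht | ht | ht <;> rcases hb with rfl | rfl <;> omega

theorem core3 {b c m : ℤ} (hm : (m - 1 - b) % 4 = 0) (hb : c = b + 1 ∨ c = b - 1) :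
    ind (c < m - 1) - ind (b < m + 1) =
      ind (c = m ∧ c < b) - ind (c = m ∧ b < c) := by
  have i1 := ind_cases (c < m - 1)
  have i2 := ind_cases (b < m + 1)
  have i5 := ind_cases (c = m ∧ c < b)
  have i6 := ind_cases (c = m ∧ b < c)
  have ht : m - 1 ≤ b - 4 ∨ m - 1 = b ∨ b + 4 ≤ m - 1 := by omega
  clear hm
  rcases ht with ht | ht | ht <;> rcases hb with rfl | rfl <;> omega

theorem L_half {n : ℕ} (hn : 2 ≤ n) {ε : ℝ} (h0 : 0 < ε) (h1 : ε < 1 / 2) {l : ℤ}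
    (hl : l % 2 = 1) {y : ℕ → ℤ} (hy : HI n l y) (j : ℕ) (m : ℤ) :
    L n (fs (cls n ε) (mkH n ε l y)) (j, m) = ind (CH n y true j m) - ind (CH n y false j m) := by
  have hpn := hy.parn hn
  have hla := hy.la
  by_cases hX : (j, m) ∈ XB n
  · rcases hX with ⟨g1, g2⟩ | ⟨g1, g2, g3⟩
    · simp only [] at g1 g2
      subst g1
      have e1 : ((j - 1 : ℕ) : ℤ) = j - 1 := by omega
      rw [L_n g2, fs_mkH hn h0 h1 hl hy, fs_mkH hn h0 h1 hl hy, fs_mkH hn h0 h1 hl hy,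
        fs_mkH hn h0 h1 hl hy]
      simp only [CH_true, CH_false, e1]
      generalize y (j + 1) = a at *
      generalize y (j - 1) = b at *
      generalize y j = c at *
      have z1 : j - 1 ≤ j := by omega
      have z2 : 1 ≤ j := by omega
      by_cases hm : (m - l) % 4 = 0
      · have q1 : ¬ (m - 1 - (l + 1 + 2 * ((j : ℤ) + j))) % 4 = 0 := by omega
        have q2 : (m + 1 - (l + 1 + 2 * ((j : ℤ) + j))) % 4 = 0 := by omega
        have q3 : ¬ (m + 1 - (l + 1 + 2 * ((j : ℤ) + (j - 1)))) % 4 = 0 := by omega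
        have q4 : (m - 1 - (l + 1 + 2 * ((j : ℤ) + (j - 1)))) % 4 = 0 := by omega
        simp only [q1, q2, q3, q4, z1, z2, true_and, false_and, and_false, le_refl, lt_self_iff_false,
          false_imp_iff, and_true]
        rw [ind_false not_false]
        have := core2 (c := c) (b := b) (m := m) (by omega) (by omega)
        omega
      · have q1 : (m - 1 - (l + 1 + 2 * ((j : ℤ) + j))) % 4 = 0 := by omega
        have q2 : ¬ (m + 1 - (l + 1 + 2 * ((j : ℤ) + j))) % 4 = 0 := by omega
        have q3 : (m + 1 - (l + 1 + 2 * ((j : ℤ) + (j - 1)))) % 4 = 0 := by omega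
        have q4 : ¬ (m - 1 - (l + 1 + 2 * ((j : ℤ) + (j - 1)))) % 4 = 0 := by omega
        simp only [q1, q2, q3, q4, z1, z2, true_and, false_and, and_false, le_refl, lt_self_iff_false,
          false_imp_iff, and_true]
        rw [ind_false not_false]
        have := core3 (c := c) (b := b) (m := m) (by omega) (by omega)
        omega
    · simp only [] at g1 g2 g3
      rw [L_lt g1 g2 g3, fs_mkH hn h0 h1 hl hy, fs_mkH hn h0 h1 hl hy, fs_mkH hn h0 h1 hl hy,
        fs_mkH hn h0 h1 hl hy]
      simp only [CH_true, CH_false]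
      have p1 := hy.par g2
      have p2 := hy.st (j - 1) (by omega)
      have e1 : ((j - 1 : ℕ) : ℤ) = j - 1 := by omega
      rw [show j - 1 + 1 = j by omega] at p2
      have p3 : y (j + 1) = y j + 2 ∨ y (j + 1) = y j - 2 ∨ (j + 1 = n ∧
        (y (j + 1) = y j + 1 ∨ y (j + 1) = y j - 1)) := by
        by_cases h : j + 2 ≤ n
        · have := hy.st j h; tauto
        · have : n = j + 1 := by omega
          subst this
          rw [show j + 1 - 1 = j by omega] at hla
          omega
      clear hpn hla hy h0 h1
      push_cast
      rw [e1]
      generalize y (j + 1) = a at *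
      generalize y (j - 1) = b at *
      generalize y j = c at *
      have hjn : j < n := g2
      have z1 : j ≤ n := by omega
      have z2 : j - 1 ≤ n := by omega
      have z3 : j + 1 ≤ n := by omega
      by_cases hm : (m - c) % 4 = 0
      · have q1 : (m - 2 - (l + 1 + 2 * ((n : ℤ) + j))) % 4 = 0 := by omega
        have q2 : (m + 2 - (l + 1 + 2 * ((n : ℤ) + j))) % 4 = 0 := by omega
        have q3 : (m - (l + 1 + 2 * ((n : ℤ) + (j - 1)))) % 4 = 0 := by omega
        have q4 : (m - (l + 1 + 2 * ((n : ℤ) + (j + 1)))) % 4 = 0 := by omega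
        simp only [q1, q2, q3, q4, z1, z2, z3, g1, hjn, true_and, true_imp_iff]
        exact core hm (by omega) (by omega)
      · have q1 : ¬ (m - 2 - (l + 1 + 2 * ((n : ℤ) + j))) % 4 = 0 := by omega
        have q2 : ¬ (m + 2 - (l + 1 + 2 * ((n : ℤ) + j))) % 4 = 0 := by omega
        have q3 : ¬ (m - (l + 1 + 2 * ((n : ℤ) + (j - 1)))) % 4 = 0 := by omega
        have q4 : ¬ (m - (l + 1 + 2 * ((n : ℤ) + (j + 1)))) % 4 = 0 := by omega
        have q5 : c ≠ m := by omega
        simp only [q1, q2, q3, q4, q5, false_and, and_false]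
        simp [ind]
  · rw [L_neg hX]
    have h' : ¬ ((j = n ∧ m % 2 = 1) ∨ (1 ≤ j ∧ j < n ∧ m % 2 = 0)) := hX
    have A : 1 ≤ j → j ≤ n → y j = m → False := by
      intro a1 a2 a3
      by_cases h : j < n
      · have := hy.par h; omega
      · have : j = n := by omega
        subst this
        omega
    rw [ind_false, ind_false]
    · rfl
    · rw [CH_false]; rintro ⟨a1, a2, a3, _⟩; exact A a1 a2 a3
    · rw [CH_true]; rintro ⟨a1, a2, a3, _⟩; exact A a1 a2 a3

end TB

namespace TB

structure Emb (n : ℕ) (ε : ℝ) (p : List (ℝ × ℝ)) (l : ℤ) (y : ℕ → ℤ) (pos : ℕ → ℕ) : Prop where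
  at_ : ∀ r, r ≤ n → pos r < p.length ∧ pt p (pos r) = hpt n ε l y r
  nb : ∀ r, 1 ≤ r → r < n → 1 ≤ pos r ∧ pos r + 1 < p.length ∧
    ((pos r - 1 = pos (r - 1) ∧ pos r + 1 = pos (r + 1)) ∨
      (pos r + 1 = pos (r - 1) ∧ pos r - 1 = pos (r + 1)))

structure Pth (n : ℕ) (ε : ℝ) (p : List (ℝ × ℝ)) (l : ℤ) (y : ℕ → ℤ) (pos : ℕ → ℕ)
    (l' : ℤ) (z : ℕ → ℤ) (pos' : ℕ → ℕ) : Prop where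
  hl : l % 2 = 1
  hl' : l' % 2 = 1
  hy : HI n l y
  hz : HI n l' z
  E : Emb n ε p l y pos
  E' : Emb n ε p l' z pos'
  cov : ∀ r, r < p.length → ∃ s, s ≤ n ∧ (r = pos s ∨ r = pos' s)

theorem Pth.swap {n ε p l y pos l' z pos'} (h : Pth n ε p l y pos l' z pos') :
    Pth n ε p l' z pos' l y pos :=
  ⟨h.hl', h.hl, h.hz, h.hy, h.E', h.E, fun r hr => by
    obtain ⟨s, hs, h⟩ := h.cov r hr; exact ⟨s, hs, h.symm⟩⟩

theorem iota_lt {n j : ℕ} {m : ℤ} (h : j < n) : iotaB n (j, m) =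
    (if (2 * (n : ℤ) + m - 2 * (j : ℤ)) % 4 = 2 then 2 * (j : ℤ)
      else 4 * (n : ℤ) - 2 - 2 * (j : ℤ), m) := by
  unfold iotaB
  simp only []
  rw [if_neg h.ne]
  split_ifs <;> rfl

theorem hpt_iota {n : ℕ} {ε : ℝ} {l : ℤ} {y : ℕ → ℤ} (hl : l % 2 = 1) (hy : HI n l y)
    {r : ℕ} (hr : r ≤ n) {j : ℕ} (hj : 1 ≤ j) (hjn : j < n) {m : ℤ} (hm : m % 2 = 0) :
    hpt n ε l y r = (((iotaB n (j, m)).1 : ℝ), ((iotaB n (j, m)).2 : ℝ)) ↔ r = j ∧ y j = m := by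
  rw [iota_lt hjn]
  simp only []
  by_cases h : r < n
  · rw [hpt_lt h, Prod.mk.injEq, Int.cast_inj]
    have hp := hy.par h
    have e : col n l r = (((if l % 4 = 3 then 2 * (r : ℤ) else 4 * n - 2 - 2 * r) : ℤ) : ℝ) := by
      unfold col; split_ifs <;> push_cast <;> rfl
    rw [e, Int.cast_inj]
    constructor
    · rintro ⟨a, b⟩
      have : r = j := by split_ifs at a <;> omega
      subst this
      exact ⟨rfl, b⟩
    · rintro ⟨rfl, b⟩
      refine ⟨?_, b⟩
      split_ifs <;> omega
  · have : r = n := by omega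
    subst this
    rw [hpt_n]
    constructor
    · intro hh
      exfalso
      have := (Prod.mk.inj hh).1
      have : 2 * (r : ℤ) - 1 = (if (2 * (r : ℤ) + m - 2 * (j : ℤ)) % 4 = 2 then 2 * (j : ℤ)
        else 4 * (r : ℤ) - 2 - 2 * (j : ℤ)) := by exact_mod_cast this
      split_ifs at this <;> omega
    · omega

section
variable {n : ℕ} (hn : 2 ≤ n) {ε : ℝ} (h0 : 0 < ε) (h1 : ε < 1 / 2)
include hn h0 h1

theorem hpt_cmp {l : ℤ} {y : ℕ → ℤ} (hy : HI n l y) {r : ℕ} (hr : r + 1 ≤ n) :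
    ((hpt n ε l y r).2 < (hpt n ε l y (r + 1)).2 ↔ y r < y (r + 1)) ∧
    ((hpt n ε l y (r + 1)).2 < (hpt n ε l y r).2 ↔ y (r + 1) < y r) := by
  by_cases h : r + 1 < n
  · rw [hpt_lt h, hpt_lt (by omega)]
    exact ⟨Int.cast_lt, Int.cast_lt⟩
  · have : n = r + 1 := by omega
    subst this
    rw [hpt_n, hpt_lt (by omega)]
    have hla := hy.la
    rw [show r + 1 - 1 = r by omega] at *
    simp only []
    rcases hla with h | h
    · have e : y (r + 1) = y r + 1 := by omega
      rw [h, e]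
      push_cast
      constructor <;> constructor <;> intro <;> first | omega | linarith
    · have e : y (r + 1) = y r - 1 := by omega
      rw [h, e]
      push_cast
      constructor <;> constructor <;> intro <;> first | omega | linarith

theorem emb_corner {p l y pos} (hy : HI n l y) (E : Emb n ε p l y pos) {j : ℕ} (hj : 1 ≤ j)
    (hjn : j < n) (b : Bool) (m : ℤ) (hm : y j = m) :
    (if b then (pt p (pos j)).2 < (pt p (pos j - 1)).2 ∧ (pt p (pos j)).2 < (pt p (pos j + 1)).2
       else (pt p (pos j - 1)).2 < (pt p (pos j)).2 ∧ (pt p (pos j + 1)).2 < (pt p (pos j)).2)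
    ↔ CH n y b j m := by
  obtain ⟨_, _, h⟩ := E.nb j hj hjn
  have e1 := (E.at_ j hjn.le).2
  have e2 := (E.at_ (j - 1) (by omega)).2
  have e3 := (E.at_ (j + 1) (by omega)).2
  have c1 := hpt_cmp hn h0 h1 hy (r := j - 1) (by omega)
  have c2 := hpt_cmp hn h0 h1 hy (r := j) (by omega)
  rw [show j - 1 + 1 = j by omega] at c1
  unfold CH
  simp only [hj, hjn.le, hm, hjn, true_and, true_imp_iff]
  rw [hm] at c1 c2
  rcases h with ⟨ha, hb⟩ | ⟨ha, hb⟩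
  · rw [ha, hb, e1, e2, e3]
    cases b
    · simp [c1, c2]
    · simp [c1, c2]
  · rw [ha, hb, e1, e2, e3]
    cases b
    · simp [c1, c2, and_comm]
    · simp [c1, c2, and_comm]

theorem Cp_lt {p l y pos l' z pos'} (H : Pth n ε p l y pos l' z pos') {j : ℕ} (hj : 1 ≤ j)
    (hjn : j < n) (b : Bool) (m : ℤ) :
    (j, m) ∈ Cp (.B n ε) p b ↔ CH n y b j m ∨ CH n z b j m := by
  constructor
  · rintro ⟨hX, ⟨r, hr1, hr2, hr3, _, _, _, hr4⟩ | ⟨hh, _⟩⟩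
    · have hm : m % 2 = 0 := by
        have h' : ((j = n ∧ m % 2 = 1) ∨ (1 ≤ j ∧ j < n ∧ m % 2 = 0)) := hX
        omega
      obtain ⟨s, hs, rfl | rfl⟩ := H.cov r (by omega)
      · left
        have e := hr3
        rw [(H.E.at_ s hs).2] at e
        obtain ⟨rfl, e⟩ := (hpt_iota H.hl H.hy hs hj hjn hm).1 e
        exact (emb_corner hn h0 h1 H.hy H.E hj hjn b m e).1 hr4
      · right
        have e := hr3
        rw [(H.E'.at_ s hs).2] at e
        obtain ⟨rfl, e⟩ := (hpt_iota H.hl' H.hz hs hj hjn hm).1 e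
        exact (emb_corner hn h0 h1 H.hz H.E' hj hjn b m e).1 hr4
    · simp only [] at hh; omega
  · have key : ∀ {l y pos}, l % 2 = 1 → HI n l y → Emb n ε p l y pos → CH n y b j m →
        (j, m) ∈ Cp (.B n ε) p b := by
      intro l y pos hl hy E hC
      have hym : y j = m := hC.2.2.1
      have hm : m % 2 = 0 := by have := hy.par hjn; omega
      obtain ⟨g1, g2, _⟩ := E.nb j hj hjn
      have e1 : (iotaB n (j, m)).1 ≠ 0 ∧ (iotaB n (j, m)).1 ≠ 2 * (n : ℤ) - 1 ∧
          (iotaB n (j, m)).1 ≠ 4 * (n : ℤ) - 2 := by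
        rw [iota_lt hjn]
        simp only []
        split_ifs <;> omega
      refine ⟨Or.inr ⟨hj, hjn, hm⟩, Or.inl ⟨pos j, g1, g2, ?_, e1.1, e1.2.1, e1.2.2, ?_⟩⟩
      · rw [(E.at_ j hjn.le).2]
        exact (hpt_iota hl hy hjn.le hj hjn hm).2 ⟨rfl, hym⟩
      · exact (emb_corner hn h0 h1 hy E hj hjn b m hym).2 hC
    rintro (h | h)
    · exact key H.hl H.hy H.E h
    · exact key H.hl' H.hz H.E' h

theorem hpt_mid {l : ℤ} {y : ℕ → ℤ} (hy : HI n l y) {r : ℕ} (hr : r ≤ n) {e s : ℤ}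
    (hs : s = 1 ∨ s = -1) :
    hpt n ε l y r = (2 * (n : ℝ) - 1, (e : ℝ) + ε * s) ↔ r = n ∧ y n = e ∧ y n - y (n - 1) = s := by
  by_cases h : r < n
  · rw [hpt_lt h]
    constructor
    · intro hh
      exfalso
      have e : col n l r = (((if l % 4 = 3 then 2 * (r : ℤ) else 4 * n - 2 - 2 * r) : ℤ) : ℝ) := by
        unfold col; split_ifs <;> push_cast <;> rfl
      have := (Prod.mk.inj hh).1
      rw [e] at this
      have : (if l % 4 = 3 then 2 * (r : ℤ) else 4 * n - 2 - 2 * r) = 2 * (n : ℤ) - 1 := by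
        exact_mod_cast this
      split_ifs at this <;> omega
    · omega
  · have : r = n := by omega
    subst this
    rw [hpt_n]
    constructor
    · intro hh
      exact ⟨rfl, key_inj h0 h1 hy.la hs (Prod.mk.inj hh).2⟩
    · rintro ⟨_, a, b⟩
      rw [b, a]

theorem mem_mid {p l y pos l' z pos'} (H : Pth n ε p l y pos l' z pos') (e s : ℤ)
    (hs : s = 1 ∨ s = -1) : (2 * (n : ℝ) - 1, (e : ℝ) + ε * s) ∈ p ↔
      (y n = e ∧ y n - y (n - 1) = s) ∨ (z n = e ∧ z n - z (n - 1) = s) := by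
  constructor
  · intro h
    obtain ⟨r, hr, h⟩ := mem_pt h
    obtain ⟨u, hu, rfl | rfl⟩ := H.cov r hr
    · rw [(H.E.at_ u hu).2] at h
      exact Or.inl ((hpt_mid hn h0 h1 H.hy hu hs).1 h).2
    · rw [(H.E'.at_ u hu).2] at h
      exact Or.inr ((hpt_mid hn h0 h1 H.hz hu hs).1 h).2
  · rintro (h | h)
    · rw [← (hpt_mid hn h0 h1 H.hy le_rfl hs).2 ⟨rfl, h⟩, ← (H.E.at_ n le_rfl).2]
      exact pt_mem (H.E.at_ n le_rfl).1
    · rw [← (hpt_mid hn h0 h1 H.hz le_rfl hs).2 ⟨rfl, h⟩, ← (H.E'.at_ n le_rfl).2]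
      exact pt_mem (H.E'.at_ n le_rfl).1

theorem CH_n_true {l y m} (hy : HI n l y) : CH n y true n m ↔ (y n = m ∧ y n - y (n - 1) = -1) := by
  have := hy.la
  rw [CH_true]
  omega

theorem CH_n_false {l y m} (hy : HI n l y) : CH n y false n m ↔ (y n = m ∧ y n - y (n - 1) = 1) := by
  have := hy.la
  rw [CH_false]
  omega

theorem Cp_n {p l y pos l' z pos'} (H : Pth n ε p l y pos l' z pos') (b : Bool) (m : ℤ) :
    (n, m) ∈ Cp (.B n ε) p b ↔ (CH n y b n m ∨ CH n z b n m) ∧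
      ¬ (CH n y (!b) n m ∨ CH n z (!b) n m) := by
  have a1 := mem_mid hn h0 h1 H m 1 (Or.inl rfl)
  have a2 := mem_mid hn h0 h1 H m (-1) (Or.inr rfl)
  rw [← CH_n_false hn h0 h1 H.hy, ← CH_n_false hn h0 h1 H.hz] at a1
  rw [← CH_n_true hn h0 h1 H.hy, ← CH_n_true hn h0 h1 H.hz] at a2
  rw [show (m : ℝ) + ε * ((1 : ℤ) : ℝ) = m + ε by push_cast; ring] at a1
  rw [show (m : ℝ) + ε * ((-1 : ℤ) : ℝ) = m - ε by push_cast; ring] at a2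
  have e : (iotaB n (n, m)).1 = 2 * (n : ℤ) - 1 := by simp [iotaB]
  have step : (n, m) ∈ Cp (.B n ε) p b ↔ (n, m) ∈ XB n ∧ (if b then
      (2 * (n : ℝ) - 1, (m : ℝ) - ε) ∈ p ∧ (2 * (n : ℝ) - 1, (m : ℝ) + ε) ∉ p
      else (2 * (n : ℝ) - 1, (m : ℝ) + ε) ∈ p ∧ (2 * (n : ℝ) - 1, (m : ℝ) - ε) ∉ p) := by
    constructor
    · rintro ⟨hX, ⟨r, _, _, _, _, h, _⟩ | ⟨_, h⟩⟩
      · exact absurd e h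
      · exact ⟨hX, h⟩
    · rintro ⟨hX, h⟩
      exact ⟨hX, Or.inr ⟨rfl, h⟩⟩
  rw [step, a1, a2]
  have par : ∀ {l y b}, l % 2 = 1 → HI n l y → CH n y b n m → (n, m) ∈ XB n := by
    intro l y b hl hy hC
    refine Or.inl ⟨rfl, ?_⟩
    simp only []
    have := hC.2.2.1
    have := hy.parn hn
    have := hy.la
    omega
  constructor
  · rintro ⟨_, h⟩
    cases b <;> simpa using h
  · intro h
    refine ⟨?_, ?_⟩
    · rcases h.1 with h | h
      · exact par H.hl H.hy h
      · exact par H.hl' H.hz h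
    · cases b <;> simpa using h

theorem Cp_X {p b x} (h : x ∈ Cp (.B n ε) p b) : x ∈ XB n := h.1

end

end TB

namespace TB

noncomputable def mkF (n : ℕ) (ε : ℝ) (l : ℤ) (y : ℕ → ℤ) (l' : ℤ) (z : ℕ → ℤ) : List (ℝ × ℝ) :=
  mkH n ε l y ++ (mkH n ε l' z).reverse

theorem len_mkF (n ε l y l' z) : (mkF n ε l y l' z).length = 2 * n + 2 := by
  simp [mkF, len_mkH]; omega

theorem pt_F_left {n ε l y l' z r} (h : r ≤ n) : pt (mkF n ε l y l' z) r = hpt n ε l y r := by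
  rw [← pt_mkH h]
  unfold mkF pt
  rw [List.getD_append _ _ _ _ (by rw [len_mkH]; omega)]

theorem pt_F_right {n ε l y l' z r} (h : r ≤ n) :
    pt (mkF n ε l y l' z) (2 * n + 1 - r) = hpt n ε l' z r := by
  rw [← pt_mkH h]
  unfold mkF pt
  rw [List.getD_append_right _ _ _ _ (by rw [len_mkH]; omega), len_mkH,
    List.getD_eq_getElem _ _ (by rw [List.length_reverse, len_mkH]; omega),
    List.getD_eq_getElem _ _ (by rw [len_mkH]; omega), List.getElem_reverse]
  congr 1
  rw [len_mkH]; omega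

theorem pth_spin {n ε l y} (hl : l % 2 = 1) (hy : HI n l y) :
    Pth n ε (mkH n ε l y) l y id l y id := by
  have E : Emb n ε (mkH n ε l y) l y id := by
    refine ⟨fun r hr => ⟨?_, ?_⟩, fun r h1 h2 => ⟨h1, ?_, Or.inl ⟨rfl, rfl⟩⟩⟩
    · rw [len_mkH]; show r < n + 1; omega
    · exact pt_mkH hr
    · rw [len_mkH]; show r + 1 < n + 1; omega
  refine ⟨hl, hl, hy, hy, E, E, fun r hr => ⟨r, ?_, Or.inl rfl⟩⟩
  rw [len_mkH] at hr; omega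

theorem pth_full {n ε l y l' z} (hl : l % 2 = 1) (hl' : l' % 2 = 1) (hy : HI n l y)
    (hz : HI n l' z) :
    Pth n ε (mkF n ε l y l' z) l y id l' z (fun r => 2 * n + 1 - r) := by
  refine ⟨hl, hl', hy, hz, ?_, ?_, fun r hr => ?_⟩
  · refine ⟨fun r hr => ⟨?_, ?_⟩, fun r h1 h2 => ⟨h1, ?_, Or.inl ⟨rfl, rfl⟩⟩⟩
    · rw [len_mkF]; show r < 2 * n + 2; omega
    · exact pt_F_left hr
    · rw [len_mkF]; show r + 1 < 2 * n + 2; omega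
  · refine ⟨fun r hr => ⟨?_, ?_⟩, fun r h1 h2 => ⟨?_, ?_, Or.inr ⟨?_, ?_⟩⟩⟩
    · rw [len_mkF]; omega
    · exact pt_F_right hr
    · omega
    · rw [len_mkF]; omega
    · omega
    · omega
  · rw [len_mkF] at hr
    by_cases h : r ≤ n
    · exact ⟨r, h, Or.inl rfl⟩
    · exact ⟨2 * n + 1 - r, by omega, Or.inr (by omega)⟩

def Cr (n : ℕ) (y z : ℕ → ℤ) : Prop := 4 * z n + (z n - z (n - 1)) < 4 * y n + (y n - y (n - 1))

theorem mem_full {n : ℕ} (hn : 2 ≤ n) {ε : ℝ} (h0 : 0 < ε) (h1 : ε < 1 / 2) {i : ℕ} (hi : i < n)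
    {k : ℤ} {p : List (ℝ × ℝ)} : p ∈ pathsB n ε i k ↔ ∃ y z,
      HI n (k - (2 * (n : ℤ) - 2 * (i : ℤ) - 1)) y ∧ HI n (k + (2 * (n : ℤ) - 2 * (i : ℤ) - 1)) z ∧
      Cr n y z ∧ p = mkF n ε (k - (2 * (n : ℤ) - 2 * (i : ℤ) - 1)) y
        (k + (2 * (n : ℤ) - 2 * (i : ℤ) - 1)) z := by
  unfold pathsB
  rw [if_neg hi.ne]
  constructor
  · rintro ⟨a, b, ha, hb, rfl, _, hc⟩
    obtain ⟨y, hy, rfl⟩ := (mem_spin hn).1 ha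
    obtain ⟨z, hz, rfl⟩ := (mem_spin hn).1 hb
    refine ⟨y, z, hy, hz, ?_, rfl⟩
    rw [pt_mkH le_rfl, pt_mkH le_rfl, hpt_n, hpt_n] at hc
    exact (key_lt h0 h1 hz.la hy.la).1 (sub_pos.1 hc)
  · rintro ⟨y, z, hy, hz, hc, rfl⟩
    refine ⟨_, _, (mem_spin hn).2 ⟨y, hy, rfl⟩, (mem_spin hn).2 ⟨z, hz, rfl⟩, rfl, ?_, ?_⟩
    · rw [pt_mkH le_rfl, pt_mkH le_rfl, hpt_n, hpt_n]
    · rw [pt_mkH le_rfl, pt_mkH le_rfl, hpt_n, hpt_n]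
      exact sub_pos.2 ((key_lt h0 h1 hz.la hy.la).2 hc)

theorem fs_mkF {n ε l y l' z} (x) : fs (cls n ε) (mkF n ε l y l' z) x =
    fs (cls n ε) (mkH n ε l y) x + fs (cls n ε) (mkH n ε l' z) x := by
  unfold mkF fs
  rw [List.map_append, List.sum_append, List.map_reverse, List.sum_reverse]

theorem wt_mid {n : ℕ} {ε : ℝ} (h0 : 0 < ε) (h1 : ε < 1 / 2) {e s : ℤ} (he : e % 2 = 1)
    (hs : s = 1 ∨ s = -1) (a : ℕ) (b : ℤ) {v : ℝ} (hv : v = (e : ℝ) + ε * s) :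
    wt (cls n ε) (2 * (n : ℝ) - 1, v) (a, b) =
      ind (a = n ∧ b % 2 = 0 ∧ (e - s - b) % 4 = 0 ∧ e < b) := by
  subst hv
  unfold wt
  rw [cls_mid h0 h1 hs]
  apply ind_congr
  simp only []
  constructor
  · rintro ⟨⟨g1, g2, g3⟩, g4⟩
    exact ⟨g1, g2, g3, (key_int h0 h1 hs (by omega)).1 g4⟩
  · rintro ⟨g1, g2, g3, g4⟩
    exact ⟨⟨g1, g2, g3⟩, (key_int h0 h1 hs (by omega)).2 g4⟩

theorem wt_iota {n : ℕ} {ε : ℝ} {j : ℕ} (hj : j < n) {l : ℤ} (hl : l % 2 = 0) (e : ℤ)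
    (a : ℕ) (b : ℤ) {v : ℝ} (hv : v = e) :
    wt (cls n ε) (((iotaB n (j, l - 2)).1 : ℝ), v) (a, b) =
      ind (a = j ∧ (b - l) % 4 = 0 ∧ e < b) := by
  subst hv
  unfold wt
  rw [iota_lt hj]
  simp only []
  apply ind_congr
  rw [Int.cast_lt]
  split_ifs with h
  · have := cls_left (ε := ε) hj (e : ℝ) a b
    push_cast
    rw [this]
    constructor
    · rintro ⟨⟨g1, g2⟩, g4⟩
      exact ⟨g1.symm, by omega, g4⟩
    · rintro ⟨g1, g2, g3⟩
      exact ⟨⟨g1.symm, by omega⟩, g3⟩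
  · have := cls_right (ε := ε) hj (e : ℝ) a b
    push_cast
    rw [this]
    constructor
    · rintro ⟨⟨g1, g2⟩, g4⟩
      exact ⟨g1.symm, by omega, g4⟩
    · rintro ⟨g1, g2, g3⟩
      exact ⟨⟨g1.symm, by omega⟩, g3⟩

theorem low {n : ℕ} (hn : 2 ≤ n) {ε : ℝ} (h0 : 0 < ε) (h1 : ε < 1 / 2) {i : ℕ} {k : ℤ} {j : ℕ}
    {l : ℤ} (hW : (j, l) ∈ W (.B n ε)) {p q : List (ℝ × ℝ)}
    (h : LoweredTo (.B n ε) i k j l p q) : fs (cls n ε) q = fs (cls n ε) p - Y (j, l) := by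
  obtain ⟨g1, g2, g3⟩ := (mem_W hn).1 hW
  obtain ⟨_, _, _, h⟩ := h
  simp only [] at h
  funext ⟨a, b⟩
  simp only [Pi.sub_apply, Y, Prod.mk.injEq]
  split_ifs at h with c1 c2
  · subst c1
    unfold fs
    rw [sum_replace1 h, wt_mid h0 h1 (e := l - 1) (s := -1) (by omega) (by omega) _ _ (by push_cast; ring),
      wt_mid h0 h1 (e := l + 1) (s := 1) (by omega) (by omega) _ _ (by push_cast; ring)]
    have i1 := ind_cases (a = j ∧ b % 2 = 0 ∧ (l - 1 - -1 - b) % 4 = 0 ∧ l - 1 < b)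
    have i2 := ind_cases (a = j ∧ b % 2 = 0 ∧ (l + 1 - 1 - b) % 4 = 0 ∧ l + 1 < b)
    split_ifs <;> omega
  · have hj : j < n := by omega
    unfold fs
    rw [sum_replace2 h, wt_mid h0 h1 (e := l - 1) (s := 1) (by omega) (by omega) _ _ (by push_cast; ring),
      wt_mid h0 h1 (e := l + 1) (s := -1) (by omega) (by omega) _ _ (by push_cast; ring),
      wt_iota hj g3 (l - 2) _ _ (by push_cast; ring), wt_iota hj g3 (l + 2) _ _ (by push_cast; ring)]
    have i1 := ind_cases (a = n ∧ b % 2 = 0 ∧ (l - 1 - 1 - b) % 4 = 0 ∧ l - 1 < b)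
    have i2 := ind_cases (a = n ∧ b % 2 = 0 ∧ (l + 1 - -1 - b) % 4 = 0 ∧ l + 1 < b)
    have i3 := ind_cases (a = j ∧ (b - l) % 4 = 0 ∧ l - 2 < b)
    have i4 := ind_cases (a = j ∧ (b - l) % 4 = 0 ∧ l + 2 < b)
    have e : ind (a = n ∧ b % 2 = 0 ∧ (l - 1 - 1 - b) % 4 = 0 ∧ l - 1 < b) =
      ind (a = n ∧ b % 2 = 0 ∧ (l + 1 - -1 - b) % 4 = 0 ∧ l + 1 < b) := ind_congr (by omega)
    rw [e]
    clear i1 i2 e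
    split_ifs <;> omega
  · have hj : j < n := by omega
    unfold fs
    rw [sum_replace1 h,
      wt_iota hj g3 (l - 2) _ _ (by push_cast; ring), wt_iota hj g3 (l + 2) _ _ (by push_cast; ring)]
    have i3 := ind_cases (a = j ∧ (b - l) % 4 = 0 ∧ l - 2 < b)
    have i4 := ind_cases (a = j ∧ (b - l) % 4 = 0 ∧ l + 2 < b)
    split_ifs <;> omega

theorem bool1 {A B C D : Prop} (d1 : ¬ (A ∧ B)) (d2 : ¬ (C ∧ D)) :
    ind (A ∨ B) - ind (C ∨ D) = ind A - ind C + (ind B - ind D) := by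
  by_cases A <;> by_cases B <;> by_cases C <;> by_cases D <;> simp_all [ind]

theorem bool2 {A B C D : Prop} (d1 : ¬ (A ∧ B)) (d2 : ¬ (C ∧ D)) (d3 : ¬ (A ∧ C)) (d4 : ¬ (B ∧ D)) :
    ind ((A ∨ B) ∧ ¬ (C ∨ D)) - ind ((C ∨ D) ∧ ¬ (A ∨ B)) = ind A - ind C + (ind B - ind D) := by
  by_cases A <;> by_cases B <;> by_cases C <;> by_cases D <;> simp_all [ind]

section
variable {n : ℕ} (hn : 2 ≤ n) {ε : ℝ} (h0 : 0 < ε) (h1 : ε < 1 / 2)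
include hn h0 h1

theorem CH_excl {y : ℕ → ℤ} {j m} (h : CH n y true j m) (h' : CH n y false j m) : False := by
  rw [CH_true] at h; rw [CH_false] at h'; omega

theorem CH_disj {l l' y z} (hy : HI n l y) (hz : HI n l' z) (hll : (l - l') % 4 = 2) {b : Bool}
    {j m} (h : CH n y b j m) (h' : CH n z b j m) : False := by
  by_cases hj : j < n
  · have a := hy.par hj
    have c := hz.par hj
    have := h.2.2.1
    have := h'.2.2.1
    omega
  · have := h.2.1
    have : j = n := by omega
    subst this
    have := hy.parn hn
    have := hz.parn hn
    cases b
    · have := (CH_n_false hn h0 h1 hy).1 h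
      have := (CH_n_false hn h0 h1 hz).1 h'
      omega
    · have := (CH_n_true hn h0 h1 hy).1 h
      have := (CH_n_true hn h0 h1 hz).1 h'
      omega

theorem CH_X {l : ℤ} {y} (hl : l % 2 = 1) (hy : HI n l y) {b : Bool} {j m} (h : CH n y b j m) :
    (j, m) ∈ XB n := by
  have h3 := h.2.2.1
  by_cases hj : j < n
  · have a := hy.par hj
    exact Or.inr ⟨h.1, hj, by simp only []; omega⟩
  · have := h.2.1
    have : j = n := by omega
    subst this
    have := hy.parn hn
    have := hy.la
    exact Or.inl ⟨rfl, by simp only []; omega⟩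

theorem mon_spin {l : ℤ} {y} (hl : l % 2 = 1) (hy : HI n l y) :
    mon (.B n ε) (mkH n ε l y) = L n (fs (cls n ε) (mkH n ε l y)) := by
  have H := pth_spin (ε := ε) hl hy
  funext ⟨j, m⟩
  rw [L_half hn h0 h1 hl hy]
  have key : ∀ b, (j, m) ∈ Cp (.B n ε) (mkH n ε l y) b ↔ CH n y b j m := by
    intro b
    by_cases hX : (j, m) ∈ XB n
    · rcases hX with ⟨g1, _⟩ | ⟨g1, g2, _⟩
      · simp only [] at g1
        subst g1
        rw [Cp_n hn h0 h1 H]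
        constructor
        · tauto
        · intro h
          refine ⟨Or.inl h, ?_⟩
          rintro (h' | h') <;> cases b <;>
            first | exact CH_excl hn h0 h1 h h' | exact CH_excl hn h0 h1 h' h
      · rw [Cp_lt hn h0 h1 H g1 g2, or_self]
    · exact iff_of_false (fun h => hX (Cp_X hn h0 h1 h)) (fun h => hX (CH_X hn h0 h1 hl hy h))
  unfold mon
  rw [ind_congr (key true), ind_congr (key false)]

theorem mon_full {l l' : ℤ} {y z} (hl : l % 2 = 1) (hl' : l' % 2 = 1) (hy : HI n l y)
    (hz : HI n l' z) (hll : (l - l') % 4 = 2) :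
    mon (.B n ε) (mkF n ε l y l' z) = L n (fs (cls n ε) (mkF n ε l y l' z)) := by
  have H := pth_full (ε := ε) hl hl' hy hz
  have e : fs (cls n ε) (mkF n ε l y l' z) =
    fs (cls n ε) (mkH n ε l y) + fs (cls n ε) (mkH n ε l' z) := funext fun x => fs_mkF x
  rw [e, map_add]
  funext ⟨j, m⟩
  rw [Pi.add_apply, L_half hn h0 h1 hl hy, L_half hn h0 h1 hl' hz]
  unfold mon
  by_cases hX : (j, m) ∈ XB n
  · have d1 : ¬ (CH n y true j m ∧ CH n z true j m) := fun h => CH_disj hn h0 h1 hy hz hll h.1 h.2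
    have d2 : ¬ (CH n y false j m ∧ CH n z false j m) := fun h => CH_disj hn h0 h1 hy hz hll h.1 h.2
    have d3 : ¬ (CH n y true j m ∧ CH n y false j m) := fun h => CH_excl hn h0 h1 h.1 h.2
    have d4 : ¬ (CH n z true j m ∧ CH n z false j m) := fun h => CH_excl hn h0 h1 h.1 h.2
    rcases hX with ⟨g1, _⟩ | ⟨g1, g2, _⟩
    · simp only [] at g1
      subst g1
      rw [ind_congr (Cp_n hn h0 h1 H true m), ind_congr (Cp_n hn h0 h1 H false m)]
      exact bool2 d1 d2 d3 d4
    · rw [ind_congr (Cp_lt hn h0 h1 H g1 g2 true m), ind_congr (Cp_lt hn h0 h1 H g1 g2 false m)]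
      exact bool1 d1 d2
  · have a : ∀ b, ¬ CH n y b j m := fun b h => hX (CH_X hn h0 h1 hl hy h)
    have a' : ∀ b, ¬ CH n z b j m := fun b h => hX (CH_X hn h0 h1 hl' hz h)
    have c : ∀ b, ¬ (j, m) ∈ Cp (.B n ε) (mkF n ε l y l' z) b := fun b h => hX (Cp_X hn h0 h1 h)
    rw [ind_false (a _), ind_false (a _), ind_false (a' _), ind_false (a' _), ind_false (c _),
      ind_false (c _)]
    rfl

end

end TB

namespace TB

def HLow (n : ℕ) (y y' : ℕ → ℤ) (j : ℕ) (m : ℤ) : Prop :=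
  (j = n ∧ y n = m - 1 ∧ y (n - 1) = m ∧ y' n = m + 1 ∧ ∀ r, r < n → y' r = y r) ∨
  (j + 1 = n ∧ y j = m - 2 ∧ y n = m - 1 ∧ y' j = m + 2 ∧ y' n = m + 1 ∧ ∀ r, r < j → y' r = y r) ∨
  (j + 1 < n ∧ y j = m - 2 ∧ y' j = m + 2 ∧ ∀ r, r ≤ n → r ≠ j → y' r = y r)

theorem exl {n : ℕ} (hn : 2 ≤ n) {l : ℤ} (hl : l % 2 = 1) {y z : ℕ → ℤ} (hy : HI n l y)
    (hz : HI n l z) (hle : ∀ r, r ≤ n → y r ≤ z r) (hne : ∃ r, r ≤ n ∧ y r ≠ z r) :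
    ∃ j m y', 1 ≤ j ∧ j ≤ n ∧ m % 2 = 0 ∧ HLow n y y' j m ∧ HI n l y' ∧
      (∀ r, r ≤ n → y' r ≤ z r) ∧ (∀ r, r ≤ n → y r ≤ y' r) ∧
      CH n y true j (m - if j = n then 1 else 2) := by
  obtain ⟨r0, hr0, hne⟩ := hne
  have hr0' := hle r0 hr0
  obtain ⟨j, hj, hmin⟩ := Finset.exists_min_image
    ((Finset.range (n + 1)).filter fun r => y r < z r) y
    ⟨r0, by simp; omega⟩
  simp only [Finset.mem_filter, Finset.mem_range, and_imp] at hj hmin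
  obtain ⟨hjn, hlt⟩ := hj
  have hpn := hy.parn hn
  have hpn' := hz.parn hn
  have hla := hy.la
  have hla' := hz.la
  have hj1 : 1 ≤ j := by
    by_contra h
    have : j = 0 := by omega
    subst this
    have := hy.y0
    have := hz.y0
    omega
  have lastle := hle (n - 1) (by omega)
  by_cases c1 : j = n
  · subst c1
    have hm1 := hmin (j - 1) (by omega)
    have s1 : y (j - 1) = y j + 1 := by omega
    refine ⟨j, y j + 1, Function.update y j (y j + 2), hj1, le_rfl, by omega, Or.inl ⟨rfl, ?_, ?_, ?_, ?_⟩, ⟨?_, ?_, ?_⟩, ?_, ?_, ?_⟩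
    · omega
    · omega
    · rw [Function.update_self]; ring
    · intro r hr; rw [Function.update_of_ne (by omega)]
    · rw [Function.update_of_ne (by omega), hy.y0]
    · intro r hr
      rw [Function.update_of_ne (by omega), Function.update_of_ne (by omega)]
      exact hy.st r hr
    · rw [Function.update_self, Function.update_of_ne (by omega)]; omega
    · intro r hr
      by_cases h : r = j
      · subst h; rw [Function.update_self]; omega
      · rw [Function.update_of_ne h]; exact hle r hr
    · intro r hr
      by_cases h : r = j
      · subst h; rw [Function.update_self]; omega
      · rw [Function.update_of_ne h]
    · rw [if_pos rfl, CH_true]; omega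
  · have hp := hy.par (r := j) (by omega)
    have hp' := hz.par (r := j) (by omega)
    have st1 := hy.st (j - 1) (by omega)
    have st1' := hz.st (j - 1) (by omega)
    rw [show j - 1 + 1 = j by omega] at st1 st1'
    have hm1 := hmin (j - 1) (by omega)
    have s1 : y (j - 1) = y j + 2 := by omega
    have hm2 := hmin (j + 1) (by omega)
    by_cases c2 : j + 1 = n
    · subst c2
      rw [show j + 1 - 1 = j by omega] at *
      have s2 : y (j + 1) = y j + 1 := by omega
      refine ⟨j, y j + 2, Function.update (Function.update y j (y j + 4)) (j + 1) (y j + 3), hj1, by omega, by omega, Or.inr (Or.inl ⟨rfl, ?_, ?_, ?_, ?_, ?_⟩), ⟨?_, ?_, ?_⟩, ?_, ?_, ?_⟩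
      · omega
      · omega
      · rw [Function.update_of_ne (by omega), Function.update_self]; ring
      · rw [Function.update_self]; ring
      · intro r hr; rw [Function.update_of_ne (by omega), Function.update_of_ne (by omega)]
      · rw [Function.update_of_ne (by omega), Function.update_of_ne (by omega), hy.y0]
      · intro r hr
        have := hy.st r hr
        by_cases h : r + 1 = j
        · subst h
          rw [Function.update_of_ne (by omega), Function.update_self, Function.update_of_ne (by omega),
            Function.update_of_ne (by omega)]
          rw [show r + 1 - 1 = r by omega] at s1
          omega
        · rw [Function.update_of_ne (by omega), Function.update_of_ne (by omega),
            Function.update_of_ne (by omega), Function.update_of_ne (by omega)]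
          exact this
      · rw [show j + 1 - 1 = j by omega, Function.update_self, Function.update_of_ne (by omega),
          Function.update_self]; omega
      · intro r hr
        by_cases h : r = j + 1
        · subst h; rw [Function.update_self]; omega
        · rw [Function.update_of_ne h]
          by_cases h : r = j
          · subst h; rw [Function.update_self]; omega
          · rw [Function.update_of_ne h]; exact hle r hr
      · intro r hr
        by_cases h : r = j + 1
        · subst h; rw [Function.update_self]; omega
        · rw [Function.update_of_ne h]
          by_cases h : r = j
          · subst h; rw [Function.update_self]; omega
          · rw [Function.update_of_ne h]
      · rw [if_neg c1, CH_true]; omega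
    · have st2 := hy.st j (by omega)
      have st2' := hz.st j (by omega)
      have s2 : y (j + 1) = y j + 2 := by omega
      refine ⟨j, y j + 2, Function.update y j (y j + 4), hj1, by omega, by omega, Or.inr (Or.inr ⟨by omega, ?_, ?_, ?_⟩), ⟨?_, ?_, ?_⟩, ?_, ?_, ?_⟩
      · omega
      · rw [Function.update_self]; ring
      · intro r hr h; rw [Function.update_of_ne h]
      · rw [Function.update_of_ne (by omega), hy.y0]
      · intro r hr
        have := hy.st r hr
        by_cases h : r + 1 = j
        · subst h
          rw [Function.update_self, Function.update_of_ne (by omega)]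
          rw [show r + 1 - 1 = r by omega] at s1
          omega
        · by_cases h' : r = j
          · subst h'
            rw [Function.update_self, Function.update_of_ne (by omega)]
            omega
          · rw [Function.update_of_ne (by omega), Function.update_of_ne (by omega)]
            exact this
      · rw [Function.update_of_ne (by omega), Function.update_of_ne (by omega)]; exact hla
      · intro r hr
        by_cases h : r = j
        · subst h; rw [Function.update_self]; omega
        · rw [Function.update_of_ne h]; exact hle r hr
      · intro r hr
        by_cases h : r = j
        · subst h; rw [Function.update_self]; omega
        · rw [Function.update_of_ne h]
      · rw [if_neg c1, CH_true]; omega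

theorem clause {n : ℕ} (hn : 2 ≤ n) {ε : ℝ} {p p' : List (ℝ × ℝ)} {l : ℤ} {y y' : ℕ → ℤ}
    {pos : ℕ → ℕ} (hl : l % 2 = 1) (hy : HI n l y) (E : Emb n ε p l y pos)
    (E' : Emb n ε p' l y' pos) (hlen : p'.length = p.length) (hinj : pos (n - 1) ≠ pos n)
    (hrest : ∀ s, s < p.length → (∀ r, r ≤ n → s = pos r → hpt n ε l y' r = hpt n ε l y r) →
      pt p' s = pt p s) {j : ℕ} {m : ℤ} (hj1 : 1 ≤ j) (hm : m % 2 = 0) (h : HLow n y y' j m) :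
    (if j = n then
       Replace1 p p' (2 * (n : ℝ) - 1, (m : ℝ) - 1 - ε) (2 * (n : ℝ) - 1, (m : ℝ) + 1 + ε)
     else if j = n - 1 then
       Replace2 p p'
         (((iotaB n (j, m - 2)).1 : ℝ), (m : ℝ) - 2) (((iotaB n (j, m - 2)).1 : ℝ), (m : ℝ) + 2)
         (2 * (n : ℝ) - 1, (m : ℝ) - 1 + ε) (2 * (n : ℝ) - 1, (m : ℝ) + 1 - ε)
     else
       Replace1 p p'
         (((iotaB n (j, m - 2)).1 : ℝ), (m : ℝ) - 2) (((iotaB n (j, m - 2)).1 : ℝ), (m : ℝ) + 2)) := by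
  have hio : j < n → y j = m - 2 → y' j = m + 2 →
      hpt n ε l y j = (((iotaB n (j, m - 2)).1 : ℝ), (m : ℝ) - 2) ∧
      hpt n ε l y' j = (((iotaB n (j, m - 2)).1 : ℝ), (m : ℝ) + 2) := by
    intro hjn a1 a2
    have e := (hpt_iota (ε := ε) hl hy hjn.le hj1 hjn (m := m - 2) (by omega)).2 ⟨rfl, a1⟩
    rw [hpt_lt hjn] at e ⊢
    rw [hpt_lt hjn]
    have e1 := (Prod.mk.inj e).1
    rw [e1, a1, a2]
    constructor <;> push_cast <;> rfl
  rcases h with ⟨c, a1, a2, a3, a4⟩ | ⟨c, a1, a2, a3, a4, a5⟩ | ⟨c, a1, a2, a3⟩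
  · rw [if_pos c]
    refine ⟨pos n, (E.at_ n le_rfl).1, ?_, hlen, ?_, ?_⟩
    · rw [(E.at_ n le_rfl).2, hpt_n, a1, a2]
      refine Prod.ext rfl ?_
      push_cast; ring
    · rw [(E'.at_ n le_rfl).2, hpt_n, a3, a4 (n - 1) (by omega), a2]
      refine Prod.ext rfl ?_
      push_cast; ring
    · intro s hs hne
      refine hrest s hs fun r hr hsr => ?_
      have : r ≠ n := by rintro rfl; exact hne hsr
      rw [hpt_lt (by omega), hpt_lt (by omega), a4 r (by omega)]
  · rw [if_neg (by omega), if_pos (by omega)]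
    obtain ⟨i1, i2⟩ := hio (by omega) a1 a3
    have e : n - 1 = j := by omega
    rw [e] at hinj
    refine ⟨pos j, pos n, (E.at_ j (by omega)).1, (E.at_ n le_rfl).1, hinj, ?_, ?_, hlen, ?_, ?_, ?_⟩
    · rw [(E.at_ j (by omega)).2, i1]
    · rw [(E.at_ n le_rfl).2, hpt_n, e, a1, a2]
      refine Prod.ext rfl ?_
      push_cast; ring
    · rw [(E'.at_ j (by omega)).2, i2]
    · rw [(E'.at_ n le_rfl).2, hpt_n, e, a3, a4]
      refine Prod.ext rfl ?_
      push_cast; ring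
    · intro s hs hne hne'
      refine hrest s hs fun r hr hsr => ?_
      have : r ≠ n := by rintro rfl; exact hne' hsr
      have : r ≠ j := by rintro rfl; exact hne hsr
      rw [hpt_lt (by omega), hpt_lt (by omega), a5 r (by omega)]
  · rw [if_neg (by omega), if_neg (by omega)]
    obtain ⟨i1, i2⟩ := hio (by omega) a1 a2
    refine ⟨pos j, (E.at_ j (by omega)).1, ?_, hlen, ?_, ?_⟩
    · rw [(E.at_ j (by omega)).2, i1]
    · rw [(E'.at_ j (by omega)).2, i2]
    · intro s hs hne
      refine hrest s hs fun r hr hsr => ?_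
      have : r ≠ j := by rintro rfl; exact hne hsr
      by_cases h : r < n
      · rw [hpt_lt h, hpt_lt h, a3 r hr this]
      · have : r = n := by omega
        subst this
        rw [hpt_n, hpt_n, a3 r le_rfl (by omega), a3 (r - 1) (by omega) (by omega)]

theorem mkH_congr {n : ℕ} {ε : ℝ} {l y z} (h : ∀ r, r ≤ n → y r = z r) : mkH n ε l y = mkH n ε l z := by
  unfold mkH
  refine List.map_congr_left fun r hr => ?_
  have hr := List.mem_range.1 hr
  unfold hpt
  rw [h r (by omega), h n le_rfl, h (n - 1) (by omega)]

section
variable {n : ℕ} (hn : 2 ≤ n) {ε : ℝ} (h0 : 0 < ε) (h1 : ε < 1 / 2)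
include hn h0 h1

theorem canLower {p l y pos l' z pos'} (H : Pth n ε p l y pos l' z pos') {j : ℕ} {m : ℤ}
    (hC : CH n y true j (m - if j = n then 1 else 2)) (c1 : j < n → z j ≠ m + 2)
    (c2 : j = n → ¬ (z n = m - 1 ∧ z n - z (n - 1) = 1))
    (c3 : j = n → ¬ (z n = m + 1 ∧ z n - z (n - 1) = -1)) : CanLower (.B n ε) p j m := by
  have hj1 := hC.1
  have hjn := hC.2.1
  unfold CanLower
  have hr : ((rr (.B n ε) j : ℕ) : ℤ) = if j = n then 1 else 2 := by
    show (((if j = n then 1 else 2 : ℕ)) : ℤ) = _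
    split_ifs <;> rfl
  rw [hr]
  have hyj := hC.2.2.1
  by_cases h : j < n
  · rw [if_neg h.ne] at *
    rw [Cp_lt hn h0 h1 H hj1 h, Cp_lt hn h0 h1 H hj1 h]
    refine ⟨Or.inl hC, ?_⟩
    rintro (g | g)
    · have := g.2.2.1; omega
    · exact c1 h g.2.2.1
  · have : j = n := by omega
    subst this
    rw [if_pos rfl] at *
    rw [Cp_n hn h0 h1 H, Cp_n hn h0 h1 H]
    refine ⟨⟨Or.inl hC, ?_⟩, ?_⟩
    · rintro (g | g)
      · exact CH_excl hn h0 h1 hC g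
      · exact c2 rfl ((CH_n_false hn h0 h1 H.hz).1 g)
    · rintro ⟨g | g, _⟩
      · have := g.2.2.1; omega
      · exact c3 rfl ((CH_n_true hn h0 h1 H.hz).1 g)

theorem hpt_le {l y z} (hy : HI n l y) (hz : HI n l z) {r : ℕ} (hr : r ≤ n) :
    (hpt n ε l y r).2 ≤ (hpt n ε l z r).2 ↔ y r ≤ z r := by
  by_cases h : r < n
  · rw [hpt_lt h, hpt_lt h]; exact Int.cast_le
  · have : r = n := by omega
    subst this
    rw [hpt_n, hpt_n, ← not_lt, ← not_lt]
    refine not_congr ((key_lt h0 h1 hz.la hy.la).trans ?_)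
    have := hy.la
    have := hz.la
    have := hy.parn hn
    have := hz.parn hn
    omega

theorem wa_spin {l y z} (hy : HI n l y) (hz : HI n l z) :
    WeaklyAbove (mkH n ε l y) (mkH n ε l z) ↔ ∀ r, r ≤ n → y r ≤ z r := by
  constructor
  · intro h r hr
    have := h.2 r (by rw [len_mkH]; omega)
    rw [pt_mkH hr, pt_mkH hr] at this
    exact (hpt_le hn h0 h1 hy hz hr).1 this
  · intro h
    refine ⟨by rw [len_mkH, len_mkH], fun r hr => ?_⟩
    rw [len_mkH] at hr
    rw [pt_mkH (by omega), pt_mkH (by omega)]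
    exact (hpt_le hn h0 h1 hy hz (by omega)).2 (h r (by omega))

theorem wa_full {l y y' l' z z'} (hy : HI n l y) (hy' : HI n l y') (hz : HI n l' z)
    (hz' : HI n l' z') :
    WeaklyAbove (mkF n ε l y l' z) (mkF n ε l y' l' z') ↔
      (∀ r, r ≤ n → y r ≤ y' r) ∧ (∀ r, r ≤ n → z r ≤ z' r) := by
  constructor
  · intro h
    refine ⟨fun r hr => ?_, fun r hr => ?_⟩
    · have := h.2 r (by rw [len_mkF]; omega)
      rw [pt_F_left hr, pt_F_left hr] at this
      exact (hpt_le hn h0 h1 hy hy' hr).1 this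
    · have := h.2 (2 * n + 1 - r) (by rw [len_mkF]; omega)
      rw [pt_F_right hr, pt_F_right hr] at this
      exact (hpt_le hn h0 h1 hz hz' hr).1 this
  · rintro ⟨h, h'⟩
    refine ⟨by rw [len_mkF, len_mkF], fun r hr => ?_⟩
    rw [len_mkF] at hr
    by_cases g : r ≤ n
    · rw [pt_F_left g, pt_F_left g]
      exact (hpt_le hn h0 h1 hy hy' g).2 (h r g)
    · rw [show r = 2 * n + 1 - (2 * n + 1 - r) by omega, pt_F_right (by omega), pt_F_right (by omega)]
      exact (hpt_le hn h0 h1 hz hz' (by omega)).2 (h' _ (by omega))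

theorem mono_half {l y z} (hy : HI n l y) (hz : HI n l z)
    (h : ∀ j m, j ≤ n → (m - (l + 1 + 2 * ((n : ℤ) + j))) % 4 = 0 → z j < m → y j < m) (r : ℕ)
    (hr : r ≤ n) : y r ≤ z r := by
  have A : ∀ r, r < n → y r ≤ z r := by
    intro r hr
    have p1 := hy.par hr
    have p2 := hz.par hr
    have := h r (z r + 2) hr.le (by omega) (by omega)
    omega
  by_cases hr' : r < n
  · exact A r hr'
  · have : r = n := by omega
    subst this
    have := A (r - 1) (by omega)
    have := hy.la
    have := hz.la
    have := hy.parn hn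
    have := hz.parn hn
    have := h r (y (r - 1)) le_rfl (by omega)
    omega

end

end TB

namespace TB

section
variable {n : ℕ} (hn : 2 ≤ n) {ε : ℝ} (h0 : 0 < ε) (h1 : ε < 1 / 2)
include hn h0 h1

theorem pt_split {l y l' z} {r : ℕ} (hr : r < 2 * n + 2) :
    (r ≤ n ∧ pt (mkF n ε l y l' z) r = hpt n ε l y r) ∨
    (2 * n + 1 - r ≤ n ∧ pt (mkF n ε l y l' z) r = hpt n ε l' z (2 * n + 1 - r)) := by
  by_cases h : r ≤ n
  · exact Or.inl ⟨h, pt_F_left h⟩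
  · refine Or.inr ⟨by omega, ?_⟩
    rw [← pt_F_right (y := y) (l := l) (show 2 * n + 1 - r ≤ n by omega)]
    congr 1
    omega

theorem rank_le {l y z} (hy : HI n l y) (hz : HI n l z) (h : y n ≤ z n) :
    4 * y n + (y n - y (n - 1)) ≤ 4 * z n + (z n - z (n - 1)) := by
  have := hy.la
  have := hz.la
  have := hy.parn hn
  have := hz.parn hn
  omega

theorem ex_spin {l : ℤ} (hl : l % 2 = 1) {y z} (hy : HI n l y) (hz : HI n l z)
    (hle : WeaklyAbove (mkH n ε l y) (mkH n ε l z)) (hne : mkH n ε l y ≠ mkH n ε l z) :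
    ∃ x ∈ W (.B n ε), ∃ p', LoweredTo (.B n ε) n l x.1 x.2 (mkH n ε l y) p' ∧
      WeaklyAbove p' (mkH n ε l z) := by
  rw [wa_spin hn h0 h1 hy hz] at hle
  have hne' : ∃ r, r ≤ n ∧ y r ≠ z r := by
    by_contra h
    push Not at h
    exact hne (mkH_congr h)
  obtain ⟨j, m, y', g1, g2, g3, g4, g5, g6, g7, g8⟩ := exl hn hl hy hz hle hne'
  have H := pth_spin (ε := ε) hl hy
  have H' := pth_spin (ε := ε) hl g5
  have mem : ∀ {y}, HI n l y → mkH n ε l y ∈ P (.B n ε) n l := by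
    intro y hy
    show _ ∈ pathsB n ε n l
    unfold pathsB
    rw [if_pos rfl]
    exact (mem_spin hn).2 ⟨y, hy, rfl⟩
  refine ⟨(j, m), (mem_W hn).2 ⟨g1, g2, g3⟩, mkH n ε l y', ⟨mem hy, mem g5, ?_, ?_⟩,
    (wa_spin hn h0 h1 g5 hz).2 g6⟩
  · have hv := g8.2.2.1
    refine canLower hn h0 h1 H (j := j) (m := m) g8 ?_ ?_ ?_
    · intro h; rw [if_neg h.ne] at hv; omega
    · rintro rfl
      rw [CH_n_true hn h0 h1 hy] at g8
      omega
    · rintro rfl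
      rw [if_pos rfl] at hv
      omega
  · refine clause hn hl hy H.E H'.E ?_ (by simp only [id]; omega) ?_ g1 g3 g4
    · rw [len_mkH, len_mkH]
    · intro s hs h
      rw [len_mkH] at hs
      rw [pt_mkH (by omega), pt_mkH (by omega)]
      exact h s (by omega) rfl

theorem ex_full {i : ℕ} (hi : i < n) {k : ℤ} {l l' : ℤ}
    (el : l = k - (2 * (n : ℤ) - 2 * (i : ℤ) - 1)) (el' : l' = k + (2 * (n : ℤ) - 2 * (i : ℤ) - 1))
    (hl : l % 2 = 1) (hl' : l' % 2 = 1) (hll : (l - l') % 4 = 2)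
    {y z y' z'} (hy : HI n l y) (hz : HI n l' z)
    (hc : Cr n y z) (hy' : HI n l y') (hz' : HI n l' z') (hc' : Cr n y' z')
    (hle : WeaklyAbove (mkF n ε l y l' z) (mkF n ε l y' l' z'))
    (hne : mkF n ε l y l' z ≠ mkF n ε l y' l' z') :
    ∃ x ∈ W (.B n ε), ∃ p', LoweredTo (.B n ε) i k x.1 x.2 (mkF n ε l y l' z) p' ∧
      WeaklyAbove p' (mkF n ε l y' l' z') := by
  rw [wa_full hn h0 h1 hy hy' hz hz'] at hle
  have H := pth_full (ε := ε) hl hl' hy hz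
  have mem : ∀ {y z}, HI n l y → HI n l' z → Cr n y z → mkF n ε l y l' z ∈ P (.B n ε) i k := by
    intro y z hy hz hc
    subst el el'
    exact (mem_full hn h0 h1 hi).2 ⟨y, z, hy, hz, hc, rfl⟩
  by_cases hyy : ∃ r, r ≤ n ∧ y r ≠ y' r
  · obtain ⟨j, m, u, g1, g2, g3, g4, g5, g6, g7, g8⟩ := exl hn hl hy hy' hle.1 hyy
    have hcu : Cr n u z := lt_of_lt_of_le hc (rank_le hn h0 h1 hy g5 (g7 n le_rfl))
    have H' := pth_full (ε := ε) hl hl' g5 hz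
    refine ⟨(j, m), (mem_W hn).2 ⟨g1, g2, g3⟩, mkF n ε l u l' z, ⟨mem hy hz hc, mem g5 hz hcu, ?_, ?_⟩,
      (wa_full hn h0 h1 g5 hy' hz hz').2 ⟨g6, hle.2⟩⟩
    · have hv := g8.2.2.1
      unfold Cr at hc
      refine canLower hn h0 h1 H (j := j) (m := m) g8 ?_ ?_ ?_
      · intro h; rw [if_neg h.ne] at hv
        have := hy.par h
        have := hz.par h
        omega
      · rintro rfl
        rw [if_pos rfl, CH_n_true hn h0 h1 hy] at g8
        omega
      · rintro rfl
        rw [if_pos rfl, CH_n_true hn h0 h1 hy] at g8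
        omega
    · refine clause hn hl hy H.E H'.E ?_ (by simp only [id]; omega) ?_ g1 g3 g4
      · rw [len_mkF, len_mkF]
      · intro s hs h
        rw [len_mkF] at hs
        by_cases hsn : s ≤ n
        · rw [pt_F_left hsn, pt_F_left hsn]
          exact h s hsn rfl
        · rw [show s = 2 * n + 1 - (2 * n + 1 - s) by omega, pt_F_right (by omega),
            pt_F_right (by omega)]
  · push Not at hyy
    have hzz : ∃ r, r ≤ n ∧ z r ≠ z' r := by
      by_contra h
      push Not at h
      apply hne
      unfold mkF
      rw [mkH_congr hyy, mkH_congr h]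
    obtain ⟨j, m, u, g1, g2, g3, g4, g5, g6, g7, g8⟩ := exl hn hl' hz hz' hle.2 hzz
    have hcu : Cr n y u := by
      have := rank_le hn h0 h1 g5 hz' (g6 n le_rfl)
      unfold Cr at hc' ⊢
      rw [hyy n le_rfl, hyy (n - 1) (by omega)]
      omega
    have H' := pth_full (ε := ε) hl hl' hy g5
    refine ⟨(j, m), (mem_W hn).2 ⟨g1, g2, g3⟩, mkF n ε l y l' u, ⟨mem hy hz hc, mem hy g5 hcu, ?_, ?_⟩,
      (wa_full hn h0 h1 hy hy' g5 hz').2 ⟨hle.1, g6⟩⟩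
    · have hv := g8.2.2.1
      have hu : j = n → u n = m + 1 ∧ u n - u (n - 1) = 1 := by
        intro hj
        rcases g4 with ⟨c, a1, a2, a3, a4⟩ | ⟨c, _⟩ | ⟨c, _⟩
        · have := a4 (n - 1) (by omega)
          omega
        · omega
        · omega
      unfold Cr at hcu
      refine canLower hn h0 h1 H.swap (j := j) (m := m) g8 ?_ ?_ ?_
      · intro h; rw [if_neg h.ne] at hv
        have := hy.par h
        have := hz.par h
        omega
      · intro h
        have := hu h
        omega
      · intro h
        have := hu h
        omega
    · refine clause hn hl' hz H.E' H'.E' ?_ (by omega) ?_ g1 g3 g4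
      · rw [len_mkF, len_mkF]
      · intro s hs h
        rw [len_mkF] at hs
        by_cases hsn : s ≤ n
        · rw [pt_F_left hsn, pt_F_left hsn]
        · have := h (2 * n + 1 - s) (by omega) (by omega)
          rw [show s = 2 * n + 1 - (2 * n + 1 - s) by omega, pt_F_right (by omega),
            pt_F_right (by omega), this]

theorem mono_spin {l : ℤ} (hl : l % 2 = 1) {y z} (hy : HI n l y) (hz : HI n l z)
    (h : ∀ x, fs (cls n ε) (mkH n ε l z) x ≤ fs (cls n ε) (mkH n ε l y) x) :
    WeaklyAbove (mkH n ε l y) (mkH n ε l z) := by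
  rw [wa_spin hn h0 h1 hy hz]
  refine mono_half hn h0 h1 hy hz fun j m hj hm hlt => ?_
  have := h (j, m)
  rw [fs_mkH hn h0 h1 hl hy, fs_mkH hn h0 h1 hl hz, ind_true ⟨hj, hm, hlt⟩] at this
  exact (ind_pos (lt_of_lt_of_le one_pos this)).2.2

theorem mono_full {l l' : ℤ} (hl : l % 2 = 1) (hl' : l' % 2 = 1) (hll : (l - l') % 4 = 2)
    {y z y' z'} (hy : HI n l y) (hz : HI n l' z) (hy' : HI n l y') (hz' : HI n l' z')
    (h : ∀ x, fs (cls n ε) (mkF n ε l y' l' z') x ≤ fs (cls n ε) (mkF n ε l y l' z) x) :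
    WeaklyAbove (mkF n ε l y l' z) (mkF n ε l y' l' z') := by
  rw [wa_full hn h0 h1 hy hy' hz hz']
  constructor
  · refine mono_half hn h0 h1 hy hy' fun j m hj hm hlt => ?_
    have := h (j, m)
    rw [fs_mkF, fs_mkF, fs_mkH hn h0 h1 hl hy, fs_mkH hn h0 h1 hl hy', fs_mkH hn h0 h1 hl' hz,
      fs_mkH hn h0 h1 hl' hz', ind_true ⟨hj, hm, hlt⟩] at this
    have a : ∀ u : ℕ → ℤ, ind (j ≤ n ∧ (m - (l' + 1 + 2 * ((n : ℤ) + j))) % 4 = 0 ∧ u j < m) = 0 :=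
      fun u => ind_false (by omega)
    rw [a, a] at this
    have h2 : 0 < ind (j ≤ n ∧ (m - (l + 1 + 2 * ((n : ℤ) + j))) % 4 = 0 ∧ y j < m) := by omega
    exact (ind_pos h2).2.2
  · refine mono_half hn h0 h1 hz hz' fun j m hj hm hlt => ?_
    have := h (j, m)
    rw [fs_mkF, fs_mkF, fs_mkH hn h0 h1 hl hy, fs_mkH hn h0 h1 hl hy', fs_mkH hn h0 h1 hl' hz,
      fs_mkH hn h0 h1 hl' hz'] at this
    have a : ∀ u : ℕ → ℤ, ind (j ≤ n ∧ (m - (l + 1 + 2 * ((n : ℤ) + j))) % 4 = 0 ∧ u j < m) = 0 :=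
      fun u => ind_false (by omega)
    rw [a, a, ind_true ⟨hj, hm, hlt⟩] at this
    have h2 : 0 < ind (j ≤ n ∧ (m - (l' + 1 + 2 * ((n : ℤ) + j))) % 4 = 0 ∧ z j < m) := by omega
    exact (ind_pos h2).2.2

theorem hpt_fst {l y z} (r : ℕ) : (hpt n ε l y r).1 = (hpt n ε l z r).1 := by
  unfold hpt; split_ifs <;> rfl

theorem hpt_clse {l : ℤ} (hl : l % 2 = 1) {y z} (hy : HI n l y) (hz : HI n l z) {r : ℕ} (hr : r ≤ n)
    (x : ℕ × ℤ) (h : cls n ε (hpt n ε l y r) x) :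
    cls n ε (hpt n ε l z r) x ∧ (x ∈ W (.B n ε) ∨ hpt n ε l y r = hpt n ε l z r) := by
  obtain ⟨j, m⟩ := x
  rw [cls_hpt hn h0 h1 hl hy hr] at h
  refine ⟨(cls_hpt hn h0 h1 hl hz hr j m).2 h, ?_⟩
  obtain ⟨rfl, h⟩ := h
  by_cases hr0 : r = 0
  · right
    subst hr0
    rw [hpt_lt (by omega), hpt_lt (by omega), hy.y0, hz.y0]
  · left
    exact (mem_W hn).2 ⟨by omega, hr, by omega⟩

/-- Either a spin pair or a full pair. -/
theorem pair_cases {x : ℕ × ℤ} (hx : x ∈ X (.B n ε)) {C : List (ℝ × ℝ) → List (ℝ × ℝ) → Prop}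
    (c1 : ∀ y z, x.1 = n → x.2 % 2 = 1 → HI n x.2 y → HI n x.2 z → C (mkH n ε x.2 y) (mkH n ε x.2 z))
    (c2 : ∀ l l' y z y' z', x.1 < n → l = x.2 - (2 * (n : ℤ) - 2 * (x.1 : ℤ) - 1) →
      l' = x.2 + (2 * (n : ℤ) - 2 * (x.1 : ℤ) - 1) → l % 2 = 1 → l' % 2 = 1 → (l - l') % 4 = 2 →
      HI n l y → HI n l' z → Cr n y z → HI n l y' → HI n l' z' → Cr n y' z' →
      C (mkF n ε l y l' z) (mkF n ε l y' l' z')) :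
    ∀ p ∈ P (.B n ε) x.1 x.2, ∀ q ∈ P (.B n ε) x.1 x.2, C p q := by
  intro p hp q hq
  obtain ⟨i, k⟩ := x
  change p ∈ pathsB n ε i k at hp
  change q ∈ pathsB n ε i k at hq
  rcases hx with ⟨g1, g2⟩ | ⟨g1, g2, g3⟩
  · simp only [] at g1 g2
    unfold pathsB at hp hq
    rw [if_pos g1] at hp hq
    obtain ⟨y, hy, rfl⟩ := (mem_spin hn).1 hp
    obtain ⟨z, hz, rfl⟩ := (mem_spin hn).1 hq
    exact c1 y z g1 g2 hy hz
  · simp only [] at g1 g2 g3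
    obtain ⟨y, z, a1, a2, a3, rfl⟩ := (mem_full hn h0 h1 g2).1 hp
    obtain ⟨y', z', b1, b2, b3, rfl⟩ := (mem_full hn h0 h1 g2).1 hq
    exact c2 _ _ y z y' z' g2 rfl rfl (by omega) (by omega) (by omega) a1 a2 a3 b1 b2 b3

noncomputable def model : Model (.B n ε) where
  cls := cls n ε
  L := L n
  cls_col := cls_col
  Ldelta := by
    rintro ⟨j, l⟩ h
    exact Ldelta hn h
  Linj := fun v => Linj hn v
  mon_eq := by
    intro x hx p hp
    refine pair_cases hn h0 h1 hx (C := fun p _ => mon (.B n ε) p = L n (fs (cls n ε) p)) ?_ ?_ p hp p hp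
    · intro y z _ hl hy _
      exact mon_spin hn h0 h1 hl hy
    · intro l l' y z y' z' _ _ _ hl hl' hll hy hz _ _ _ _
      exact mon_full hn h0 h1 hl hl' hy hz hll
  low := by
    rintro x _ ⟨j, l⟩ hw p q h
    exact low hn h0 h1 hw h
  len := by
    intro x hx
    refine pair_cases hn h0 h1 hx ?_ ?_
    · intros; rw [len_mkH, len_mkH]
    · intros; rw [len_mkF, len_mkF]
  xco := by
    intro x hx
    refine pair_cases hn h0 h1 hx ?_ ?_
    · intro y z _ _ _ _ r hr
      rw [len_mkH] at hr
      rw [pt_mkH (by omega), pt_mkH (by omega)]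
      exact hpt_fst hn h0 h1 r
    · intro l l' y z y' z' _ _ _ hl hl' hll hy hz _ _ _ _ r hr
      rw [len_mkF] at hr
      by_cases h : r ≤ n
      · rw [pt_F_left h, pt_F_left h]
        exact hpt_fst hn h0 h1 r
      · rw [show r = 2 * n + 1 - (2 * n + 1 - r) by omega, pt_F_right (by omega),
            pt_F_right (by omega)]
        exact hpt_fst hn h0 h1 _
  clse := by
    intro x hx
    refine pair_cases hn h0 h1 hx ?_ ?_
    · intro y z _ hl hy hz r hr w hw
      rw [len_mkH] at hr
      rw [pt_mkH (by omega)] at hw ⊢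
      rw [pt_mkH (by omega)]
      exact hpt_clse hn h0 h1 hl hy hz (by omega) w hw
    · intro l l' y z y' z' _ _ _ hl hl' hll hy hz _ hy' hz' _ r hr w hw
      rw [len_mkF] at hr
      by_cases h : r ≤ n
      · rw [pt_F_left h] at hw ⊢
        rw [pt_F_left h]
        exact hpt_clse hn h0 h1 hl hy hy' h w hw
      · rw [show r = 2 * n + 1 - (2 * n + 1 - r) by omega, pt_F_right (by omega)] at hw ⊢
        rw [pt_F_right (by omega)]
        exact hpt_clse hn h0 h1 hl' hz hz' (by omega) w hw
  ex := by
    intro x hx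
    refine pair_cases hn h0 h1 hx ?_ ?_
    · intro y z hi hl hy hz hle hne
      rw [hi]
      exact ex_spin hn h0 h1 hl hy hz hle hne
    · intro l l' y z y' z' hi el el' hl hl' hll hy hz hc hy' hz' hc' hle hne
      exact ex_full hn h0 h1 hi el el' hl hl' hll hy hz hc hy' hz' hc' hle hne
  mono := by
    intro x hx
    refine pair_cases hn h0 h1 hx ?_ ?_
    · intro y z hi hl hy hz h
      exact mono_spin hn h0 h1 hl hy hz h
    · intro l l' y z y' z' hi el el' hl hl' hll hy hz hc hy' hz' hc' h
      exact mono_full hn h0 h1 hl hl' hll hy hz hy' hz' h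

end

end TB


/-- for non-overlapping tuples `(p_t), (p'_t) ∈ 𝒫̄` and points
`(j_r,ℓ_r) ∈ W`, `1 ≤ r ≤ R`, the following are equivalent: (i)
`∏ m(p'_t) = ∏ m(p_t) ⋅ ∏_r A_{j_r,ℓ_r}⁻¹`; (ii) for some permutation `σ` of `{1,…,R}`,
the lowering moves at `(j_{σ(1)},ℓ_{σ(1)}), …, (j_{σ(R)},ℓ_{σ(R)})`, performed in this order
starting from `(p_t)`, are all defined, keep the tuples non-overlapping, and end
at `(p'_t)`. -/
theorem stmt10 (S : Setting) (hS : S.valid) {T : ℕ} (hT : 1 ≤ T)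
    (w : Fin T → ℕ × ℤ) (hw : IsSnake S w)
    (R : ℕ) (jl : Fin R → ℕ × ℤ) (hjl : ∀ r, jl r ∈ W S)
    (ps ps' : Fin T → List (ℝ × ℝ)) (hps : ps ∈ PBar S w) (hps' : ps' ∈ PBar S w) :
    (tmon S ps' = tmon S ps - ∑ r, Amon S (jl r).1 (jl r).2) ↔
    (∃ σ : Equiv.Perm (Fin R),
      TLowerSeq S w ps ps' (List.ofFn fun r => jl (σ r))) := by
  cases S with
  | A n => exact (TA.model n).main w hw R jl hjl ps ps' hps hps'
  | B n ε =>
    obtain ⟨hn, h0, h1⟩ := hS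
    exact (TB.model hn h0 h1).main w hw R jl hjl ps ps' hps hps'


end Paper
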